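/- arXiv:2004.05781 — 3 statements merged into one kernel-verified Lean document; each statement's English description precedes it below -/
import Mathlib

section
/- Let X_A ⊂ S^ℤ be a topologically mixing subshift of finite type and μ = μ_{(P_n : n ∈ ℤ)} a Markov measure on X_A satisfying the Doeblin condition, and let ν be the homogeneous Markov measure on X_A defined by a stochastic matrix Q (compatible with A and satisfying the Doeblin condition) together with its stationary distribution λ (λQ = λ). A necessary condition for μ to be equivalent to ν is that lim_{|n|→∞} P_n = Q (entrywise). If this holds, then μ is equivalent to ν if and only if Σ_{n≥1} Σ_{s,u,v,t ∈ S} (√(P̂_{−n}(u,s)·P_n(v,t)) − √(Q̂(u,s)·Q(v,t)))² < ∞. -/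
/-!
The two-sided chain `x` is folded into the one-sided chain `k ↦ (x₋ₖ, xₖ)` on `S × S`. Under `μ` its
transition matrices are `Tₖ (u, v) (s, t) = P̂₋ₖ(u, s) Pₖ(v, t)`, and under `ν` they are
`U (u, v) (s, t) = Q̂(u, s) Q(v, t)`, so the series in the theorem is, up to its first term, the sum
of the squared Hellinger distances of the rows of `Tₖ` and `U`. Primitivity and the Doeblin
condition bound all marginals `π n s` away from `0`, hence the folded chain is again primitive with
transition probabilities bounded below on the admissible pairs.

If `μ ≪ ν`, the Hellinger affinities of the two laws on words of length `k + 1` are bounded below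
(`exists_pos_le_affinity_of_ac`). Each further letter lowers the affinity by half of an average of
the squared Hellinger distances of the rows, and by primitivity every row receives a weight bounded
below in that average; telescoping gives summability.

Conversely, given summability, compare `μ` with the chain that follows `T` up to time `n` and `U`
afterwards. Its density with respect to `ν` is bounded, and its Hellinger distance to `μ` is at most
a tail of the series. This gives `μ C ≤ B ν C + ε` for all cylinder sets `C` at once, and
approximation by cylinders yields `μ ≪ ν`. The criterion is symmetric in `μ` and `ν`, so absolute
continuity in one direction already implies equivalence.

Finally, summability alone forces `Pₙ → Q` at both ends: summing out one factor of the products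
gives `Pₙ → Q` and `P̂₋ₙ → Q̂`, and the latter implies `π₋ₙ → λ` by an `ℓ¹` contraction argument
(`tendsto_stationary`), hence `P₋ₙ → Q`.
-/

open MeasureTheory Filter Topology

namespace MarkovSFT

/-- The space of two-sided sequences over `S`. -/
abbrev Seq (S : Type*) := ℤ → S

/-- The shift by `n`: `(T^n x)_k = x_{k+n}`. -/
def shiftZ {S : Type*} (n : ℤ) (x : Seq S) : Seq S := fun k => x (k + n)

/-- The left shift `T`. -/
def shiftMap {S : Type*} : Seq S → Seq S := shiftZ 1

/-- The subshift of finite type determined by the adjacency matrix `A`. -/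
def SFT {S : Type*} (A : S → S → Bool) : Set (Seq S) :=
  {x | ∀ n : ℤ, A (x n) (x (n + 1)) = true}

/-- `A` is primitive: all entries of `A^M` are positive for some `M ≥ 1`
(expressed via the existence of admissible paths of length `M`). -/
def IsPrimitive {S : Type*} (A : S → S → Bool) : Prop :=
  ∃ M : ℕ, 1 ≤ M ∧ ∀ s t : S, ∃ u : ℕ → S,
    u 0 = s ∧ u M = t ∧ ∀ i < M, A (u i) (u (i + 1)) = true

/-- A stochastic matrix over the finite state space `S`. -/
def IsStochastic {S : Type*} [Fintype S] (P : S → S → ℝ) : Prop :=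
  (∀ s t, 0 ≤ P s t) ∧ ∀ s, ∑ t, P s t = 1

/-- The Doeblin condition for the family of transition matrices `P` relative to `A`. -/
def Doeblin {S : Type*} (A : S → S → Bool) (P : ℤ → S → S → ℝ) : Prop :=
  ∃ δ : ℝ, 0 < δ ∧ ∀ (n : ℤ) (s t : S), δ ≤ P n s t ↔ A s t = true

/-- `μ` is the Markov measure on the SFT `X_A` determined by the transition
matrices `(P n)` and coordinate distributions `(π n)`. -/
structure IsMarkovMeasure {S : Type*} [Fintype S] [MeasurableSpace S]
    (μ : Measure (Seq S)) (A : S → S → Bool)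
    (P : ℤ → S → S → ℝ) (π : ℤ → S → ℝ) : Prop where
  isProb : IsProbabilityMeasure μ
  stochastic : ∀ n, IsStochastic (P n)
  compat : ∀ (n : ℤ) (s t : S), A s t = false → P n s t = 0
  dist_nonneg : ∀ (n : ℤ) (s : S), 0 ≤ π n s
  dist_sum : ∀ n : ℤ, ∑ s, π n s = 1
  consistent : ∀ (n : ℤ) (t : S), ∑ s, π n s * P n s t = π (n + 1) t
  supp : μ (SFT A) = 1
  cylinder : ∀ (k : ℤ) (m : ℕ) (w : Fin (m + 1) → S),
    μ {x | ∀ i : Fin (m + 1), x (k + 1 + ((i : ℕ) : ℤ)) = w i}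
      = ENNReal.ofReal (π (k + 1) (w 0) *
          ∏ i : Fin m, P (k + 1 + ((i : ℕ) : ℤ)) (w i.castSucc) (w i.succ))

/-- The left shift is nonsingular with respect to `μ`:
`μ` and `μ ∘ T⁻¹` are mutually absolutely continuous. -/
def ShiftNonsingular {S : Type*} [Fintype S] [MeasurableSpace S]
    (μ : Measure (Seq S)) : Prop :=
  Measure.map (shiftMap (S := S)) μ ≪ μ ∧ μ ≪ Measure.map (shiftMap (S := S)) μ

/-- The left shift is conservative with respect to `μ`. -/
def ShiftConservative {S : Type*} [Fintype S] [MeasurableSpace S]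
    (μ : Measure (Seq S)) : Prop :=
  ∀ E : Set (Seq S), MeasurableSet E → 0 < μ E →
    ∃ n : ℕ, 1 ≤ n ∧ 0 < μ (E ∩ (shiftMap (S := S))^[n] ⁻¹' E)

/-- An element of the pseudo full-group `[[T]]` of the shift, together with
(a version of) the logarithm of its Radon–Nikodym derivative `log dμ∘V/dμ`. -/
structure PFG {S : Type*} [Fintype S] [MeasurableSpace S] (μ : Measure (Seq S)) where
  dom : Set (Seq S)
  toFun : Seq S → Seq S
  logDeriv : Seq S → ℝ
  meas_dom : MeasurableSet dom
  meas_toFun : Measurable toFun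
  meas_logDeriv : Measurable logDeriv
  injOn : Set.InjOn toFun dom
  orbit : ∀ᵐ x ∂μ.restrict dom, ∃ n : ℤ, toFun x = shiftZ n x
  deriv_spec : ∀ E : Set (Seq S), E ⊆ dom → MeasurableSet E →
    μ (toFun '' E) = ∫⁻ x in E, ENNReal.ofReal (Real.exp (logDeriv x)) ∂μ

/-- `r` is an essential value of (the Radon–Nikodym cocycle of) the shift on `(X, μ)`. -/
def IsEssentialValue {S : Type*} [Fintype S] [MeasurableSpace S]
    (μ : Measure (Seq S)) (r : ℝ) : Prop :=
  ∀ E : Set (Seq S), MeasurableSet E → 0 < μ E → ∀ ε : ℝ, 0 < ε →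
    ∃ g : PFG μ,
      0 < μ (E ∩ g.dom ∩ g.toFun ⁻¹' E ∩ {x | |g.logDeriv x - r| < ε})

end MarkovSFT
namespace MarkovSFT

/-- The reverse transition matrices `P̂_n(s,t) = π_{n-1}(t) P_{n-1}(t,s) / π_n(s)`. -/
noncomputable def reverseP {S : Type*} (P : ℤ → S → S → ℝ) (π : ℤ → S → ℝ)
    (n : ℤ) (s t : S) : ℝ :=
  if 0 < π n s then π (n - 1) t * P (n - 1) t s / π n s else 0

/-- The reverse of a homogeneous stochastic matrix `Q` with stationary vector `λ`:
`Q̂(s,t) = λ(t) Q(t,s) / λ(s)`. -/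
noncomputable def reverseQ {S : Type*} (Q : S → S → ℝ) (lam : S → ℝ) (s t : S) : ℝ :=
  lam t * Q t s / lam s

section Hellinger

variable {ι : Type*} [Fintype ι] {a b : ι → ℝ}

/-- The squared Hellinger distance of two vectors with nonnegative entries, without the
normalising factor `1 / 2`. -/
noncomputable def hellingerSq (a b : ι → ℝ) : ℝ := ∑ i, (√(a i) - √(b i)) ^ 2

/-- The Hellinger affinity (Bhattacharyya coefficient) of two vectors with nonnegative entries. -/
noncomputable def affinity (a b : ι → ℝ) : ℝ := ∑ i, √(a i) * √(b i)

theorem hellingerSq_nonneg (a b : ι → ℝ) : 0 ≤ hellingerSq a b :=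
  Finset.sum_nonneg fun _ _ => sq_nonneg _

theorem hellingerSq_comm (a b : ι → ℝ) : hellingerSq a b = hellingerSq b a :=
  Finset.sum_congr rfl fun _ _ => sub_sq_comm _ _

theorem affinity_comm (a b : ι → ℝ) : affinity a b = affinity b a :=
  Finset.sum_congr rfl fun _ _ => mul_comm _ _

theorem affinity_eq_one_sub (ha : a ∈ stdSimplex ℝ ι) (hb : b ∈ stdSimplex ℝ ι) :
    affinity a b = 1 - hellingerSq a b / 2 := by
  have h : hellingerSq a b = ∑ i, a i - 2 * affinity a b + ∑ i, b i := by
    simp only [hellingerSq, affinity, Finset.mul_sum, ← Finset.sum_sub_distrib,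
      ← Finset.sum_add_distrib]
    refine Finset.sum_congr rfl fun i _ => ?_
    rw [sub_sq, Real.sq_sqrt (ha.1 i), Real.sq_sqrt (hb.1 i), mul_assoc]
  linarith [ha.2, hb.2]

theorem sum_le_affinity {C : Finset ι} (hb : ∀ i, 0 ≤ b i) (hba : ∀ i ∈ C, b i ≤ a i) :
    ∑ i ∈ C, b i ≤ affinity a b :=
  calc ∑ i ∈ C, b i ≤ ∑ i ∈ C, √(a i) * √(b i) := Finset.sum_le_sum fun i hi => by
        nth_rw 1 [← Real.mul_self_sqrt (hb i)]
        gcongr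
        exact hba i hi
    _ ≤ affinity a b := Finset.sum_le_univ_sum_of_nonneg fun _ => by positivity

theorem sum_le_two_mul_sum_add (C : Finset ι) (ha : ∀ i, 0 ≤ a i) (hb : ∀ i, 0 ≤ b i) :
    ∑ i ∈ C, a i ≤ 2 * ∑ i ∈ C, b i + 2 * hellingerSq a b :=
  calc ∑ i ∈ C, a i ≤ ∑ i ∈ C, (2 * b i + 2 * (√(a i) - √(b i)) ^ 2) :=
        Finset.sum_le_sum fun i _ => by
          nlinarith [sq_nonneg (√(a i) - 2 * √(b i)), Real.sq_sqrt (ha i), Real.sq_sqrt (hb i)]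
    _ = 2 * ∑ i ∈ C, b i + 2 * ∑ i ∈ C, (√(a i) - √(b i)) ^ 2 := by
        rw [Finset.sum_add_distrib, Finset.mul_sum, Finset.mul_sum]
    _ ≤ 2 * ∑ i ∈ C, b i + 2 * hellingerSq a b := by
        gcongr
        exact Finset.sum_le_univ_sum_of_nonneg fun _ => sq_nonneg _

theorem tendsto_of_tendsto_hellingerSq {α : Type*} {l : Filter α} {f : α → ι → ℝ}
    (hf : ∀ n i, 0 ≤ f n i) (hb : ∀ i, 0 ≤ b i)
    (h : Tendsto (fun n => hellingerSq (f n) b) l (𝓝 0)) : Tendsto f l (𝓝 b) := by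
  refine tendsto_pi_nhds.2 fun i => ?_
  have hsq : Tendsto (fun n => (√(f n i) - √(b i)) ^ 2) l (𝓝 0) :=
    squeeze_zero (fun _ => sq_nonneg _) (fun n => Finset.single_le_sum
      (f := fun i => (√(f n i) - √(b i)) ^ 2) (fun _ _ => sq_nonneg _) (Finset.mem_univ i)) h
  have hsqrt : Tendsto (fun n => √(f n i)) l (𝓝 √(b i)) := by
    rw [tendsto_iff_norm_sub_tendsto_zero]
    simpa [Real.sqrt_sq_eq_abs] using hsq.sqrt
  simpa [Real.sq_sqrt, hf _ i, hb i] using hsqrt.pow 2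

end Hellinger

section Measure

variable {Ω : Type*} [mΩ : MeasurableSpace Ω] {μ ν : Measure Ω}

theorem exists_pos_forall_measureReal_lt_of_ac [IsFiniteMeasure μ] [IsFiniteMeasure ν]
    (h : μ ≪ ν) {ε : ℝ} (hε : 0 < ε) :
    ∃ η > 0, ∀ s : Set Ω, ν.real s < η → μ.real s < ε := by
  have hfin : ∫⁻ x, μ.rnDeriv ν x ∂ν ≠ ⊤ := (Measure.lintegral_rnDeriv_lt_top μ ν).ne
  obtain ⟨η, hη, hlt⟩ :=
    exists_pos_setLIntegral_lt_of_measure_lt hfin (ENNReal.ofReal_pos.2 hε).ne'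
  refine ⟨(min η 1).toReal, ENNReal.toReal_pos (by simp [hη.ne']) (by simp), fun s hs => ?_⟩
  have hνs : ν s < η := ((ENNReal.toReal_lt_toReal (measure_ne_top _ _) (by simp)).1 hs).trans_le
    (min_le_left _ _)
  have hμs := hlt s hνs
  rwa [Measure.setLIntegral_rnDeriv h,
    ENNReal.lt_ofReal_iff_toReal_lt (measure_ne_top _ _)] at hμs

theorem measureReal_preimage_eq_sum {ι : Type*} [MeasurableSpace ι] [MeasurableSingletonClass ι]
    {f : Ω → ι} (μ : Measure Ω) [IsFiniteMeasure μ] (hf : Measurable f) (C : Finset ι) :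
    μ.real (f ⁻¹' C) = ∑ i ∈ C, μ.real (f ⁻¹' {i}) :=
  (sum_measureReal_preimage_singleton C fun i _ => hf (measurableSet_singleton i)).symm

theorem exists_pos_le_affinity_of_ac [IsProbabilityMeasure μ] [IsProbabilityMeasure ν]
    (h : μ ≪ ν) : ∃ c > 0, ∀ {ι : Type*} [Fintype ι] [MeasurableSpace ι]
      [MeasurableSingletonClass ι] {f : Ω → ι}, Measurable f →
        c ≤ affinity (fun i => μ.real (f ⁻¹' {i})) fun i => ν.real (f ⁻¹' {i}) := by
  classical
  obtain ⟨η, hη, hlt⟩ := exists_pos_forall_measureReal_lt_of_ac h one_half_pos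
  refine ⟨min η (1 / 2), by positivity, fun {ι _ _ _ f} hf => ?_⟩
  by_contra! hsmall
  obtain ⟨hsmallη, hsmall⟩ := lt_min_iff.1 hsmall
  -- the set where `μ` dominates has small `ν`-mass, and its complement has small `μ`-mass
  let C : Finset ι := {i | ν.real (f ⁻¹' {i}) ≤ μ.real (f ⁻¹' {i})}
  have hC : μ.real (f ⁻¹' C) < 1 / 2 := by
    refine hlt _ (lt_of_le_of_lt ?_ hsmallη)
    rw [measureReal_preimage_eq_sum ν hf]
    exact sum_le_affinity (fun _ => measureReal_nonneg) fun i hi => (Finset.mem_filter_univ i).1 hi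
  have hCc : μ.real (f ⁻¹' (Cᶜ : Finset ι)) < 1 / 2 := by
    refine lt_of_le_of_lt ?_ hsmall
    rw [measureReal_preimage_eq_sum μ hf, affinity_comm]
    refine sum_le_affinity (fun _ => measureReal_nonneg) fun i hi => ?_
    have hlt := mt (Finset.mem_filter_univ i).2 (Finset.mem_compl.1 hi)
    exact (not_le.1 hlt).le
  have htotal := probReal_add_probReal_compl (μ := μ) (hf C.measurableSet)
  rw [← Set.preimage_compl, ← Finset.coe_compl] at htotal
  linarith

theorem ac_of_forall_exists_measureReal_le [IsFiniteMeasure μ] [IsFiniteMeasure ν]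
    {𝒞 : Set (Set Ω)} (h𝒞 : IsSetAlgebra 𝒞)
    (hgen : mΩ = MeasurableSpace.generateFrom 𝒞)
    (h : ∀ ε > 0, ∃ B, ∀ C ∈ 𝒞, μ.real C ≤ B * ν.real C + ε) : μ ≪ ν := by
  refine Measure.AbsolutelyContinuous.mk fun N hN hνN => ?_
  rw [← measureReal_eq_zero_iff] at hνN ⊢
  refine le_antisymm (le_of_forall_pos_le_add fun ε hε => ?_) measureReal_nonneg
  obtain ⟨B, hB⟩ := h (ε / 2) (half_pos hε)
  have hθ : 0 < ε / 2 / (|B| + 1) := by positivity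
  have hcover : ∃ D : Set (Set Ω), D.Countable ∧ D ⊆ 𝒞 ∧ (μ + ν) (⋃₀ D)ᶜ = 0 :=
    ⟨{Set.univ}, Set.countable_singleton _, by simpa using h𝒞.univ_mem, by simp⟩
  obtain ⟨C, hC, hCN⟩ := exists_measure_symmDiff_lt_of_generateFrom_isSetRing
    h𝒞.isSetRing hcover hgen hN (ENNReal.ofReal_pos.2 hθ)
  rw [ENNReal.lt_ofReal_iff_toReal_lt (measure_ne_top _ _), ← measureReal_def,
    measureReal_add_apply] at hCN
  have hCm : MeasurableSet C := hgen ▸ MeasurableSpace.measurableSet_generateFrom hC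
  have hμN := abs_le.1 (abs_measureReal_sub_le_measureReal_symmDiff (μ := μ)
    hCm.nullMeasurableSet hN.nullMeasurableSet)
  have hνC := abs_le.1 (abs_measureReal_sub_le_measureReal_symmDiff (μ := ν)
    hCm.nullMeasurableSet hN.nullMeasurableSet)
  rw [hνN, sub_zero] at hνC
  calc μ.real N ≤ μ.real C + μ.real (symmDiff C N) := by linarith [hμN.1]
    _ ≤ |B| * ν.real C + ε / 2 + μ.real (symmDiff C N) := by
        gcongr
        exact (hB C hC).trans (by gcongr; exact le_abs_self B)
    _ ≤ |B| * (ε / 2 / (|B| + 1)) + ε / 2 + ε / 2 / (|B| + 1) := by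
        have hμ0 := measureReal_nonneg (μ := μ) (s := symmDiff C N)
        have hν0 := measureReal_nonneg (μ := ν) (s := symmDiff C N)
        gcongr <;> linarith only [hνC.2, hCN, hμ0, hν0]
    _ = 0 + ε := by field_simp; ring

end Measure

section Paths

variable {E F : Type*} {r : E → E → Prop} {M : ℕ}

/-- Any two points are joined by a path of length exactly `M` along `r`. In this language a matrix
`A` is primitive if its edge relation satisfies `JoinedIn` for some `M ≥ 1`. -/
def JoinedIn (r : E → E → Prop) (M : ℕ) : Prop :=
  ∀ s t, ∃ u : ℕ → E, u 0 = s ∧ u M = t ∧ ∀ i < M, r (u i) (u (i + 1))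

theorem JoinedIn.swap (h : JoinedIn r M) : JoinedIn (fun s t => r t s) M := by
  intro s t
  obtain ⟨u, hu0, huM, hu⟩ := h t s
  refine ⟨fun i => u (M - i), by simpa, by simpa, fun i hi => ?_⟩
  simpa [show M - (i + 1) + 1 = M - i by lia] using hu (M - (i + 1)) (by lia)

theorem JoinedIn.prod {r' : F → F → Prop} (h : JoinedIn r M) (h' : JoinedIn r' M) :
    JoinedIn (fun e e' : E × F => r e.1 e'.1 ∧ r' e.2 e'.2) M := by
  rintro ⟨s, s'⟩ ⟨t, t'⟩
  obtain ⟨u, hu0, huM, hu⟩ := h s t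
  obtain ⟨u', hu0', huM', hu'⟩ := h' s' t'
  exact ⟨fun i => (u i, u' i), Prod.ext hu0 hu0', Prod.ext huM huM',
    fun i hi => ⟨hu i hi, hu' i hi⟩⟩

variable [Fintype E] {β : ℕ → E → ℝ} {R : ℕ → E → E → ℝ} {δ : ℝ}

theorem JoinedIn.pow_mul_le (h : JoinedIn r M) (hδ : 0 ≤ δ) (hβ : ∀ s, 0 ≤ β 0 s)
    (hR : ∀ k s t, 0 ≤ R k s t) (hδR : ∀ k s t, r s t → δ ≤ R k s t)
    (hstep : ∀ k t, β (k + 1) t = ∑ s, β k s * R k s t) (s t : E) :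
    δ ^ M * β 0 s ≤ β M t := by
  have hnonneg : ∀ k t, 0 ≤ β k t := fun k => by
    induction k with
    | zero => exact hβ
    | succ k ih =>
      exact fun t => hstep k t ▸ Finset.sum_nonneg fun s _ => mul_nonneg (ih s) (hR k s t)
  obtain ⟨u, rfl, rfl, hu⟩ := h s t
  have halong : ∀ i ≤ M, δ ^ i * β 0 (u 0) ≤ β i (u i) := by
    intro i hi
    induction i with
    | zero => simp
    | succ i ih =>
      calc δ ^ (i + 1) * β 0 (u 0) = δ ^ i * β 0 (u 0) * δ := by ring
        _ ≤ β i (u i) * R i (u i) (u (i + 1)) :=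
            mul_le_mul (ih (by lia)) (hδR _ _ _ (hu i hi)) hδ (hnonneg _ _)
        _ ≤ β (i + 1) (u (i + 1)) := by
            rw [hstep]
            exact Finset.single_le_sum (f := fun s => β i s * R i s (u (i + 1)))
              (fun s _ => mul_nonneg (hnonneg _ _) (hR _ _ _)) (Finset.mem_univ _)
  exact halong M le_rfl

theorem JoinedIn.pow_mul_sum_le (h : JoinedIn r M) (hδ : 0 ≤ δ) (hβ : ∀ s, 0 ≤ β 0 s)
    (hR : ∀ k s t, 0 ≤ R k s t) (hδR : ∀ k s t, r s t → δ ≤ R k s t)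
    (hstep : ∀ k t, β (k + 1) t = ∑ s, β k s * R k s t) (t : E) :
    δ ^ M * ∑ s, β 0 s ≤ Fintype.card E * β M t := by
  rw [Finset.mul_sum, ← nsmul_eq_mul]
  exact Finset.sum_le_card_nsmul _ _ _ fun s _ => h.pow_mul_le hδ hβ hR hδR hstep s t

end Paths

section Stationary

open scoped Matrix

theorem tendsto_zero_of_le_mul_add {D η : ℕ → ℝ} {ρ : ℝ} {M : ℕ} (hD : ∀ n, 0 ≤ D n)
    (hbdd : BddAbove (Set.range D)) (hρ0 : 0 ≤ ρ) (hρ1 : ρ < 1) (hη : Tendsto η atTop (𝓝 0))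
    (h : ∀ n, D (n + M) ≤ ρ * D n + η n) : Tendsto D atTop (𝓝 0) := by
  have hle : IsBoundedUnder (· ≤ ·) atTop D := hbdd.isBoundedUnder_of_range
  have hge : IsBoundedUnder (· ≥ ·) atTop D := isBoundedUnder_of ⟨0, hD⟩
  have hmono := monotone_mul_left_of_nonneg hρ0
  have hρle : IsBoundedUnder (· ≤ ·) atTop fun n => ρ * D n := hmono.isBoundedUnder_le_comp hle
  have hρge : IsBoundedUnder (· ≥ ·) atTop fun n => ρ * D n := hmono.isBoundedUnder_ge_comp hge
  have hηle := hη.isBoundedUnder_le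
  have hshift : IsBoundedUnder (· ≥ ·) atTop fun n => D (n + M) :=
    isBoundedUnder_of ⟨0, fun n => hD (n + M)⟩
  have hlim : limsup D atTop ≤ ρ * limsup D atTop :=
    calc limsup D atTop = limsup (fun n => D (n + M)) atTop := (limsup_nat_add D M).symm
      _ ≤ limsup ((fun n => ρ * D n) + η) atTop := limsup_le_limsup (Eventually.of_forall h)
          hshift.isCoboundedUnder_le (isBoundedUnder_le_add hρle hηle)
      _ ≤ limsup (fun n => ρ * D n) atTop + limsup η atTop :=
          limsup_add_le hρge hρle hη.isBoundedUnder_ge.isCoboundedUnder_le hηle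
      _ = ρ * limsup D atTop := by
          rw [hη.limsup_eq, add_zero]
          exact (hmono.map_limsup_of_continuousAt D (by fun_prop) hle
            hge.isCoboundedUnder_le).symm
  refine tendsto_of_le_liminf_of_limsup_le (le_liminf_of_le hle.isCoboundedUnder_ge
    (Eventually.of_forall hD)) ?_ hle hge
  nlinarith

variable {E : Type*} [Fintype E]

theorem sum_abs_vecMul_le {C : Matrix E E ℝ} {c : ℝ} (hc : ∀ s t, c ≤ C s t)
    (hC : ∀ s, ∑ t, C s t = 1) {d : E → ℝ} (hd : ∑ s, d s = 0) :
    ∑ t, |(d ᵥ* C) t| ≤ (1 - Fintype.card E * c) * ∑ s, |d s| :=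
  calc ∑ t, |(d ᵥ* C) t| = ∑ t, |∑ s, d s * (C s t - c)| := by
        simp only [mul_sub, Finset.sum_sub_distrib, ← Finset.sum_mul, hd, zero_mul, sub_zero]
        rfl
    _ ≤ ∑ t, ∑ s, |d s| * (C s t - c) := by
        refine Finset.sum_le_sum fun t _ => (Finset.abs_sum_le_sum_abs _ _).trans_eq ?_
        simp only [abs_mul, abs_of_nonneg (sub_nonneg.2 (hc _ t))]
    _ = ∑ s, |d s| * ∑ t, (C s t - c) := by
        rw [Finset.sum_comm]
        simp only [Finset.mul_sum]
    _ = (1 - Fintype.card E * c) * ∑ s, |d s| := by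
        simp [Finset.sum_sub_distrib, hC, ← Finset.sum_mul, mul_comm]

theorem sum_abs_sub_le_of_vecMul_eq {C : Matrix E E ℝ} {c : ℝ} (hc : ∀ s t, c ≤ C s t)
    (hC : ∀ s, ∑ t, C s t = 1) {lam : E → ℝ} (hlam : lam ᵥ* C = lam) {x : E → ℝ}
    (hx : ∑ s, x s = ∑ s, lam s) (y : E → ℝ) :
    ∑ t, |(y - lam) t|
      ≤ (1 - Fintype.card E * c) * ∑ s, |(x - lam) s| + ∑ t, |(y - x ᵥ* C) t| := by
  have hsplit : y - lam = (x - lam) ᵥ* C + (y - x ᵥ* C) := by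
    rw [Matrix.sub_vecMul, hlam, add_comm, sub_add_sub_cancel]
  calc ∑ t, |(y - lam) t| ≤ ∑ t, |((x - lam) ᵥ* C) t| + ∑ t, |(y - x ᵥ* C) t| := by
        rw [← Finset.sum_add_distrib, hsplit]
        exact Finset.sum_le_sum fun s _ => abs_add_le _ _
    _ ≤ _ := by
        gcongr
        exact sum_abs_vecMul_le hc hC (by simp [hx])

theorem tendsto_vecMul_zero {a : ℕ → E → ℝ} {D : ℕ → Matrix E E ℝ}
    (ha : ∀ n, a n ∈ stdSimplex ℝ E) (hD : Tendsto D atTop (𝓝 0)) :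
    Tendsto (fun n => a n ᵥ* D n) atTop (𝓝 0) := by
  refine tendsto_pi_nhds.2 fun t =>
    squeeze_zero_norm (a := fun n => ∑ s, |D n s t|) (fun n => ?_) ?_
  · refine (Finset.abs_sum_le_sum_abs _ _).trans (Finset.sum_le_sum fun s _ => ?_)
    rw [abs_mul, abs_of_nonneg ((ha n).1 s)]
    exact mul_le_of_le_one_left (abs_nonneg _) (mem_Icc_of_mem_stdSimplex (ha n) s).2
  · have hentry : ∀ s, Tendsto (fun n => D n s t) atTop (𝓝 0) := fun s =>
      tendsto_pi_nhds.1 (tendsto_pi_nhds.1 hD s) t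
    simpa using tendsto_finsetSum Finset.univ fun s _ => (hentry s).abs

variable {B : Matrix E E ℝ} {G : ℕ → Matrix E E ℝ} {a : ℕ → E → ℝ}

theorem tendsto_sub_vecMul_pow [DecidableEq E] (ha : ∀ n, a n ∈ stdSimplex ℝ E)
    (hG : Tendsto G atTop (𝓝 B)) (haG : ∀ n, a n ᵥ* G n = a (n + 1)) (j : ℕ) :
    Tendsto (fun n => a (n + j) - a n ᵥ* B ^ j) atTop (𝓝 0) := by
  induction j with
  | zero => simp
  | succ j ih =>
    have hstep : ∀ n, a (n + (j + 1)) - a n ᵥ* B ^ (j + 1)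
        = (a (n + j) - a n ᵥ* B ^ j) ᵥ* B + a (n + j) ᵥ* (G (n + j) - B) := fun n => by
      rw [Matrix.sub_vecMul, Matrix.vecMul_sub, Matrix.vecMul_vecMul, ← pow_succ, haG, ← add_assoc]
      abel
    have hG0 : Tendsto (fun n => G n - B) atTop (𝓝 0) := sub_self B ▸ hG.sub_const B
    have hlast := (tendsto_vecMul_zero ha hG0).comp (tendsto_add_atTop_nat j)
    have hmul : Continuous fun x : E → ℝ => x ᵥ* B := by fun_prop
    simp only [hstep]
    simpa using ((hmul.tendsto 0).comp ih).add hlast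

theorem JoinedIn.pow_le_pow_apply [DecidableEq E] {r : E → E → Prop} {M : ℕ} (hr : JoinedIn r M)
    {δ : ℝ} (hδ : 0 ≤ δ) (hB : ∀ s t, 0 ≤ B s t) (hBδ : ∀ s t, r s t → δ ≤ B s t) (s t : E) :
    δ ^ M ≤ (B ^ M) s t := by
  have h := hr.pow_mul_le (β := fun k => (B ^ k) s) (R := fun _ => B) hδ
    (fun t => by rw [pow_zero, Matrix.one_apply]; positivity) (fun _ => hB) (fun _ => hBδ)
    (fun k t => by rw [pow_succ, Matrix.mul_apply]) s t
  simpa using h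

theorem tendsto_stationary (hB : IsStochastic B) {lam : E → ℝ} (hlam : lam ∈ stdSimplex ℝ E)
    (hlamB : lam ᵥ* B = lam) {r : E → E → Prop} {M : ℕ} (hr : JoinedIn r M) {δ : ℝ} (hδ : 0 < δ)
    (hBδ : ∀ s t, r s t → δ ≤ B s t) (ha : ∀ n, a n ∈ stdSimplex ℝ E)
    (hG : Tendsto G atTop (𝓝 B)) (haG : ∀ n, a n ᵥ* G n = a (n + 1)) :
    Tendsto a atTop (𝓝 lam) := by
  classical
  have hBM := Matrix.mem_rowStochastic_iff_sum.1
    (pow_mem (Matrix.mem_rowStochastic_iff_sum.2 hB) M)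
  have hlow := hr.pow_le_pow_apply hδ.le hB.1 hBδ
  have hlamBM : ∀ j, lam ᵥ* B ^ j = lam := fun j => by
    induction j with
    | zero => simp
    | succ j ih => rw [pow_succ, ← Matrix.vecMul_vecMul, ih, hlamB]
  obtain ⟨s₀⟩ : Nonempty E := by
    by_contra h
    simpa [not_nonempty_iff.1 h] using hlam.2
  have hcard : (0 : ℝ) < Fintype.card E := by exact_mod_cast Fintype.card_pos_iff.2 ⟨s₀⟩
  have hρ0 : 0 ≤ 1 - Fintype.card E * δ ^ M := by
    rw [sub_nonneg, ← hBM.2 s₀, ← nsmul_eq_mul]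
    exact Finset.card_nsmul_le_sum _ _ _ fun t _ => hlow s₀ t
  have hbdd : BddAbove (Set.range fun n => ∑ s, |(a n - lam) s|) := by
    refine ⟨∑ _s : E, 1, Set.forall_mem_range.2 fun n => Finset.sum_le_sum fun s _ => ?_⟩
    have h := mem_Icc_of_mem_stdSimplex (ha n) s
    have hl := mem_Icc_of_mem_stdSimplex hlam s
    exact abs_sub_le_of_nonneg_of_le h.1 h.2 hl.1 hl.2
  have hsum : Tendsto (fun n => ∑ s, |(a n - lam) s|) atTop (𝓝 0) := by
    refine tendsto_zero_of_le_mul_add (fun n => Finset.sum_nonneg fun s _ => abs_nonneg _)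
      hbdd hρ0 (sub_lt_self _ (by positivity)) ?_ fun n => sum_abs_sub_le_of_vecMul_eq hlow
        hBM.2 (hlamBM M) ((ha n).2.trans hlam.2.symm) (a (n + M))
    have hpow := tendsto_pi_nhds.1 (tendsto_sub_vecMul_pow ha hG haG M)
    simpa using tendsto_finsetSum Finset.univ fun s _ => (hpow s).abs
  refine tendsto_pi_nhds.2 fun s => tendsto_iff_norm_sub_tendsto_zero.2 ?_
  exact squeeze_zero (fun _ => norm_nonneg _) (fun n => Finset.single_le_sum
    (f := fun s => |(a n - lam) s|) (fun _ _ => abs_nonneg _) (Finset.mem_univ s)) hsum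

end Stationary

section PathWeight

variable {E : Type*}

/-- The weight of the word `w` of length `k + 1` for the initial vector `p` and the transition
matrices `T`: its probability if these are stochastic. -/
def pathWeight (p : E → ℝ) (T : ℕ → E → E → ℝ) (k : ℕ) (w : Fin (k + 1) → E) : ℝ :=
  p (w 0) * ∏ i : Fin k, T i (w i.castSucc) (w i.succ)

/-- The vector `p T₀ ⋯ T₍ₖ₋₁₎`: the law of the `k`-th letter if `p` and `T` are stochastic. -/
def marginal [Fintype E] (p : E → ℝ) (T : ℕ → E → E → ℝ) : ℕ → E → ℝ
  | 0 => p
  | k + 1 => fun t => ∑ s, marginal p T k s * T k s t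

variable {p q : E → ℝ} {T U : ℕ → E → E → ℝ}

theorem pathWeight_nonneg (hp : ∀ s, 0 ≤ p s) (hT : ∀ k s t, 0 ≤ T k s t) (k : ℕ)
    (w : Fin (k + 1) → E) : 0 ≤ pathWeight p T k w :=
  mul_nonneg (hp _) (Finset.prod_nonneg fun _ _ => hT _ _ _)

theorem pathWeight_succ (p : E → ℝ) (T : ℕ → E → E → ℝ) (k : ℕ) (w : Fin (k + 2) → E) :
    pathWeight p T (k + 1) w = pathWeight p T k (Fin.init w)
      * T k (Fin.init w (Fin.last k)) (w (Fin.last (k + 1))) := by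
  simp only [pathWeight, Fin.prod_univ_castSucc, ← mul_assoc]
  rfl

theorem pathWeight_congr {k : ℕ} (h : ∀ i < k, T i = U i) :
    pathWeight p T k = pathWeight p U k := by
  ext w
  simp only [pathWeight, h _ (Fin.is_lt _)]

theorem sqrt_pathWeight_mul_sqrt_pathWeight (hp : ∀ s, 0 ≤ p s) (hT : ∀ k s t, 0 ≤ T k s t)
    (hq : ∀ s, 0 ≤ q s) (hU : ∀ k s t, 0 ≤ U k s t) (k : ℕ) (w : Fin (k + 1) → E) :
    √(pathWeight p T k w) * √(pathWeight q U k w)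
      = pathWeight (fun s => √(p s) * √(q s)) (fun k s t => √(T k s t) * √(U k s t)) k w := by
  simp only [pathWeight, Real.sqrt_mul (hp _), Real.sqrt_mul (hq _),
    Real.sqrt_prod _ fun _ _ => hT _ _ _, Real.sqrt_prod _ fun _ _ => hU _ _ _,
    Finset.prod_mul_distrib, mul_mul_mul_comm]

variable [Fintype E]

theorem sum_pathWeight_mul (p : E → ℝ) (T : ℕ → E → E → ℝ) (k : ℕ) (f : E → ℝ) :
    ∑ w, pathWeight p T k w * f (w (Fin.last k)) = ∑ s, marginal p T k s * f s := by
  induction k generalizing f with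
  | zero =>
    rw [← (Equiv.funUnique (Fin 1) E).symm.sum_comp]
    simp [pathWeight, marginal]
  | succ k ih =>
    rw [← (Fin.snocEquiv fun _ : Fin (k + 2) => E).sum_comp, Fintype.sum_prod_type_right]
    simp only [Fin.snocEquiv, Equiv.coe_fn_mk, pathWeight_succ, Fin.init_snoc, Fin.snoc_last,
      mul_assoc, ← Finset.mul_sum]
    refine (ih fun s => ∑ t, T k s t * f t).trans ?_
    simp only [marginal, Finset.sum_mul, Finset.mul_sum, mul_assoc]
    exact Finset.sum_comm

theorem sum_pathWeight (p : E → ℝ) (T : ℕ → E → E → ℝ) (k : ℕ) :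
    ∑ w, pathWeight p T k w = ∑ s, marginal p T k s := by
  simpa using sum_pathWeight_mul p T k 1

theorem sum_marginal_succ (p : E → ℝ) (T : ℕ → E → E → ℝ) (k : ℕ) :
    ∑ t, marginal p T (k + 1) t = ∑ s, marginal p T k s * ∑ t, T k s t := by
  simp only [marginal, Finset.mul_sum]
  exact Finset.sum_comm

theorem marginal_nonneg (hp : ∀ s, 0 ≤ p s) (hT : ∀ k s t, 0 ≤ T k s t) :
    ∀ k s, 0 ≤ marginal p T k s
  | 0, s => hp s
  | k + 1, t => Finset.sum_nonneg fun s _ => mul_nonneg (marginal_nonneg hp hT k s) (hT k s t)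

theorem pathWeight_mem_stdSimplex (hp : p ∈ stdSimplex ℝ E) (hT : ∀ k, IsStochastic (T k))
    (k : ℕ) : pathWeight p T k ∈ stdSimplex ℝ (Fin (k + 1) → E) := by
  refine ⟨fun w => pathWeight_nonneg hp.1 (fun k => (hT k).1) k w, ?_⟩
  rw [sum_pathWeight]
  induction k with
  | zero => exact hp.2
  | succ k ih => simp only [sum_marginal_succ, (hT k).2, mul_one, ih]

end PathWeight

section PathAffinity

variable {E : Type*} [Fintype E] {p q : E → ℝ} {T U : ℕ → E → E → ℝ}

/-- The contribution of the words ending in a given letter to the affinity of the laws of words of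
length `k + 1`. -/
noncomputable def affinityMarginal (p q : E → ℝ) (T U : ℕ → E → E → ℝ) : ℕ → E → ℝ :=
  marginal (fun s => √(p s) * √(q s)) fun k s t => √(T k s t) * √(U k s t)

theorem affinityMarginal_nonneg (p q : E → ℝ) (T U : ℕ → E → E → ℝ) (k : ℕ) (s : E) :
    0 ≤ affinityMarginal p q T U k s :=
  marginal_nonneg (fun _ => by positivity) (fun _ _ _ => by positivity) k s

theorem affinity_pathWeight (hp : ∀ s, 0 ≤ p s) (hq : ∀ s, 0 ≤ q s) (hT : ∀ k s t, 0 ≤ T k s t)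
    (hU : ∀ k s t, 0 ≤ U k s t) (k : ℕ) :
    affinity (pathWeight p T k) (pathWeight q U k) = ∑ s, affinityMarginal p q T U k s := by
  simp only [affinity, sqrt_pathWeight_mul_sqrt_pathWeight hp hT hq hU]
  exact sum_pathWeight _ _ k

theorem sum_affinityMarginal_succ (p q : E → ℝ) (hT : ∀ k, IsStochastic (T k))
    (hU : ∀ k, IsStochastic (U k)) (k : ℕ) :
    ∑ s, affinityMarginal p q T U (k + 1) s = ∑ s, affinityMarginal p q T U k s
      - (∑ s, affinityMarginal p q T U k s * hellingerSq (T k s) (U k s)) / 2 := by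
  have hrow : ∀ s, ∑ t, √(T k s t) * √(U k s t) = 1 - hellingerSq (T k s) (U k s) / 2 :=
    fun s => affinity_eq_one_sub ⟨(hT k).1 s, (hT k).2 s⟩ ⟨(hU k).1 s, (hU k).2 s⟩
  simp only [affinityMarginal, sum_marginal_succ, hrow, mul_sub, mul_one, Finset.sum_sub_distrib,
    Finset.sum_div, mul_div_assoc]

theorem hellingerSq_pathWeight_le (hp : p ∈ stdSimplex ℝ E) (hT : ∀ k, IsStochastic (T k))
    (hU : ∀ k, IsStochastic (U k)) (k : ℕ) :
    hellingerSq (pathWeight p T k) (pathWeight p U k)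
      ≤ ∑ i ∈ Finset.range k, ∑ s, hellingerSq (T i s) (U i s) := by
  have haff : ∀ k, ∑ s, affinityMarginal p p T U k s
      = 1 - hellingerSq (pathWeight p T k) (pathWeight p U k) / 2 := fun k => by
    rw [← affinity_pathWeight hp.1 hp.1 (fun k => (hT k).1) (fun k => (hU k).1),
      affinity_eq_one_sub (pathWeight_mem_stdSimplex hp hT k) (pathWeight_mem_stdSimplex hp hU k)]
  have hle_one : ∀ k s, affinityMarginal p p T U k s ≤ 1 := fun k s =>
    calc affinityMarginal p p T U k s ≤ ∑ s, affinityMarginal p p T U k s :=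
          Finset.single_le_sum (fun s _ => affinityMarginal_nonneg p p T U k s) (Finset.mem_univ s)
      _ ≤ 1 := haff k ▸ sub_le_self _ (div_nonneg (hellingerSq_nonneg _ _) zero_le_two)
  induction k with
  | zero => simp [pathWeight, hellingerSq]
  | succ k ih =>
    have hstep := sum_affinityMarginal_succ p p hT hU k
    have hweighted : ∑ s, affinityMarginal p p T U k s * hellingerSq (T k s) (U k s)
        ≤ ∑ s, hellingerSq (T k s) (U k s) := Finset.sum_le_sum fun s _ =>
      mul_le_of_le_one_left (hellingerSq_nonneg _ _) (hle_one k s)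
    rw [haff, haff] at hstep
    rw [Finset.sum_range_succ]
    linarith

theorem pow_mul_sum_affinityMarginal_le {r : E → E → Prop} {M : ℕ} (hr : JoinedIn r M) {δ : ℝ}
    (hδ : 0 ≤ δ) (hTδ : ∀ k s t, r s t → δ ≤ T k s t) (hUδ : ∀ k s t, r s t → δ ≤ U k s t)
    (p q : E → ℝ) (k : ℕ) (s : E) :
    δ ^ M * ∑ t, affinityMarginal p q T U k t
      ≤ Fintype.card E * affinityMarginal p q T U (k + M) s := by
  have hδTU : ∀ i s t, r s t → δ ≤ √(T i s t) * √(U i s t) := fun i s t hst => by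
    rw [← Real.mul_self_sqrt hδ]
    gcongr
    exacts [hTδ i s t hst, hUδ i s t hst]
  exact hr.pow_mul_sum_le (β := fun i => affinityMarginal p q T U (k + i)) hδ
    (affinityMarginal_nonneg p q T U k) (fun _ _ _ => by positivity)
    (fun i => hδTU (k + i)) (fun _ _ => rfl) s

theorem summable_of_le_sub_succ {f a : ℕ → ℝ} (hf : ∀ n, 0 ≤ f n) (ha : ∀ n, 0 ≤ a n)
    (h : ∀ n, f n ≤ a n - a (n + 1)) : Summable f := by
  refine summable_of_sum_range_le (c := a 0) hf fun n => ?_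
  calc ∑ i ∈ Finset.range n, f i ≤ ∑ i ∈ Finset.range n, (a i - a (i + 1)) :=
        Finset.sum_le_sum fun i _ => h i
    _ ≤ a 0 := by rw [Finset.sum_range_sub']; exact sub_le_self _ (ha n)

theorem summable_hellingerSq_of_le_affinity (hp : ∀ s, 0 ≤ p s) (hq : ∀ s, 0 ≤ q s)
    (hT : ∀ k, IsStochastic (T k)) (hU : ∀ k, IsStochastic (U k)) {r : E → E → Prop} {M : ℕ}
    (hr : JoinedIn r M) {δ : ℝ} (hδ : 0 < δ) (hTδ : ∀ k s t, r s t → δ ≤ T k s t)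
    (hUδ : ∀ k s t, r s t → δ ≤ U k s t) {c : ℝ} (hc : 0 < c)
    (haff : ∀ k, c ≤ affinity (pathWeight p T k) (pathWeight q U k)) :
    Summable fun k => ∑ s, hellingerSq (T k s) (U k s) := by
  simp only [affinity_pathWeight hp hq (fun k => (hT k).1) (fun k => (hU k).1)] at haff
  have hweight : ∀ k s, δ ^ M * c ≤ Fintype.card E * affinityMarginal p q T U (k + M) s :=
    fun k s => (mul_le_mul_of_nonneg_left (haff k) (by positivity)).trans
      (pow_mul_sum_affinityMarginal_le hr hδ.le hTδ hUδ p q k s)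
  have hscaled : Summable fun k => δ ^ M * c * ∑ s, hellingerSq (T (k + M) s) (U (k + M) s) := by
    refine summable_of_le_sub_succ
      (a := fun k => 2 * Fintype.card E * ∑ s, affinityMarginal p q T U (k + M) s)
      (fun k => mul_nonneg (by positivity) (Finset.sum_nonneg fun s _ => hellingerSq_nonneg _ _))
      (fun k => mul_nonneg (by positivity) (hc.le.trans (haff (k + M)))) fun k => ?_
    calc δ ^ M * c * ∑ s, hellingerSq (T (k + M) s) (U (k + M) s)
        ≤ ∑ s, Fintype.card E * affinityMarginal p q T U (k + M) s
            * hellingerSq (T (k + M) s) (U (k + M) s) := by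
          rw [Finset.mul_sum]
          exact Finset.sum_le_sum fun s _ =>
            mul_le_mul_of_nonneg_right (hweight k s) (hellingerSq_nonneg _ _)
      _ = _ := by
          rw [show k + 1 + M = k + M + 1 by lia, sum_affinityMarginal_succ p q hT hU]
          simp only [mul_assoc, ← Finset.mul_sum]
          ring
  exact (summable_nat_add_iff M).1 ((summable_mul_left_iff (by positivity)).1 hscaled)

end PathAffinity

section MarkovChain

variable {Ω E : Type*} {X : ℕ → Ω → E}

/-- The first `k + 1` letters of the path of the process `X`. -/
def pathPrefix (X : ℕ → Ω → E) (k : ℕ) (ω : Ω) : Fin (k + 1) → E := fun i => X i ω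

/-- The algebra of events that depend on finitely many letters of the path of `X`. -/
def pathAlgebra (X : ℕ → Ω → E) : Set (Set Ω) :=
  {C | ∀ᶠ k in atTop, ∃ D : Set (Fin (k + 1) → E), pathPrefix X k ⁻¹' D = C}

theorem isSetAlgebra_pathAlgebra (X : ℕ → Ω → E) : IsSetAlgebra (pathAlgebra X) where
  empty_mem := Eventually.of_forall fun _ => ⟨∅, rfl⟩
  compl_mem _ h := h.mono fun _ ⟨D, hD⟩ => ⟨Dᶜ, hD ▸ rfl⟩
  union_mem _ _ h h' := (h.and h').mono fun _ ⟨⟨D, hD⟩, D', hD'⟩ => ⟨D ∪ D', hD ▸ hD' ▸ rfl⟩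

theorem preimage_mem_pathAlgebra (X : ℕ → Ω → E) (j : ℕ) (B : Set E) :
    X j ⁻¹' B ∈ pathAlgebra X :=
  (eventually_ge_atTop j).mono fun _ hk => ⟨{w | w ⟨j, Nat.lt_succ_of_le hk⟩ ∈ B}, rfl⟩

variable [mΩ : MeasurableSpace Ω] [mE : MeasurableSpace E]

theorem measurable_pathPrefix (hX : ∀ k, Measurable (X k)) (k : ℕ) : Measurable (pathPrefix X k) :=
  measurable_pi_iff.2 fun i => hX i

theorem eq_generateFrom_pathAlgebra [Finite E] [MeasurableSingletonClass E]
    (hX : ∀ k, Measurable (X k)) (hgen : mΩ ≤ ⨆ k, mE.comap (X k)) :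
    mΩ = MeasurableSpace.generateFrom (pathAlgebra X) := by
  refine le_antisymm (hgen.trans (iSup_le fun k => ?_)) (MeasurableSpace.generateFrom_le ?_)
  · rintro _ ⟨B, -, rfl⟩
    exact MeasurableSpace.measurableSet_generateFrom (preimage_mem_pathAlgebra X k B)
  · intro C hC
    obtain ⟨k, D, rfl⟩ := Eventually.exists hC
    exact measurable_pathPrefix hX k D.toFinite.measurableSet

variable [Fintype E]

/-- Under `μ`, the process `X` is a Markov chain with initial distribution `p` and transition
matrices `T`. -/
structure IsMarkovChain (μ : Measure Ω) (X : ℕ → Ω → E) (p : E → ℝ) (T : ℕ → E → E → ℝ) :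
    Prop where
  measurable : ∀ k, Measurable (X k)
  init_mem : p ∈ stdSimplex ℝ E
  stochastic : ∀ k, IsStochastic (T k)
  law : ∀ k w, μ.real (pathPrefix X k ⁻¹' {w}) = pathWeight p T k w

variable [MeasurableSingletonClass E] {μ ν : Measure Ω} {p q : E → ℝ}
  {T U : ℕ → E → E → ℝ}

theorem IsMarkovChain.summable_hellingerSq_of_ac [IsProbabilityMeasure μ]
    [IsProbabilityMeasure ν] (hX : IsMarkovChain μ X p T) (hX' : IsMarkovChain ν X q U)
    {r : E → E → Prop} {M : ℕ} (hr : JoinedIn r M) {δ : ℝ} (hδ : 0 < δ)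
    (hTδ : ∀ k s t, r s t → δ ≤ T k s t) (hUδ : ∀ k s t, r s t → δ ≤ U k s t) (h : μ ≪ ν) :
    Summable fun k => ∑ s, hellingerSq (T k s) (U k s) := by
  obtain ⟨c, hc, hle⟩ := exists_pos_le_affinity_of_ac h
  refine summable_hellingerSq_of_le_affinity hX.init_mem.1 hX'.init_mem.1 hX.stochastic
    hX'.stochastic hr hδ hTδ hUδ hc fun k => ?_
  simpa only [hX.law, hX'.law] using hle (measurable_pathPrefix hX.measurable k)

end MarkovChain

section Switch

variable {E : Type*} {p q : E → ℝ} {T U : ℕ → E → E → ℝ}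

/-- The transition matrices that follow `T` before time `n` and `U` from time `n` on. -/
def switchAt (n : ℕ) (T U : ℕ → E → E → ℝ) (k : ℕ) : E → E → ℝ := if k < n then T k else U k

theorem exists_pathWeight_le_mul [Finite E] (hp : ∀ s, 0 ≤ p s) (hq : ∀ s, 0 ≤ q s)
    (hT : ∀ k s t, 0 ≤ T k s t) (hU : ∀ k s t, 0 ≤ U k s t) (hqp : ∀ s, q s = 0 → p s = 0)
    (hUT : ∀ k s t, U k s t = 0 → T k s t = 0) (k : ℕ) :
    ∃ B, ∀ w, pathWeight p T k w ≤ B * pathWeight q U k w := by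
  have := Fintype.ofFinite E
  have hzero : ∀ w, pathWeight q U k w = 0 → pathWeight p T k w = 0 := fun w h => by
    simp only [pathWeight, mul_eq_zero, Finset.prod_eq_zero_iff] at h ⊢
    exact h.imp (hqp _) fun ⟨i, hi, h0⟩ => ⟨i, hi, hUT _ _ _ h0⟩
  refine ⟨∑ w, pathWeight p T k w / pathWeight q U k w, fun w => ?_⟩
  calc pathWeight p T k w = pathWeight p T k w / pathWeight q U k w * pathWeight q U k w :=
        (div_mul_cancel_of_imp (hzero w)).symm
    _ ≤ _ := mul_le_mul_of_nonneg_right (Finset.single_le_sum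
        (f := fun w => pathWeight p T k w / pathWeight q U k w)
        (fun w _ => div_nonneg (pathWeight_nonneg hp hT k w) (pathWeight_nonneg hq hU k w))
        (Finset.mem_univ w)) (pathWeight_nonneg hq hU k w)

theorem exists_pathWeight_switchAt_le_mul [Finite E] (hp : ∀ s, 0 ≤ p s) (hq : ∀ s, 0 ≤ q s)
    (hT : ∀ k s t, 0 ≤ T k s t) (hU : ∀ k s t, 0 ≤ U k s t) (hqp : ∀ s, q s = 0 → p s = 0)
    (hUT : ∀ k s t, U k s t = 0 → T k s t = 0) (n : ℕ) :
    ∃ B, ∀ k ≥ n, ∀ w, pathWeight p (switchAt n T U) k w ≤ B * pathWeight q U k w := by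
  obtain ⟨B, hB⟩ := exists_pathWeight_le_mul hp hq hT hU hqp hUT n
  refine ⟨B, fun k hk => ?_⟩
  induction k, hk using Nat.le_induction with
  | base =>
    have hagree : pathWeight p (switchAt n T U) n = pathWeight p T n :=
      pathWeight_congr fun i hi => if_pos hi
    simpa only [hagree] using hB
  | succ k hk ih =>
    intro w
    rw [pathWeight_succ, pathWeight_succ, ← mul_assoc, switchAt, if_neg (not_lt.2 hk)]
    exact mul_le_mul_of_nonneg_right (ih _) (hU _ _ _)

variable [Fintype E]

theorem isStochastic_switchAt (hT : ∀ k, IsStochastic (T k)) (hU : ∀ k, IsStochastic (U k))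
    (n k : ℕ) : IsStochastic (switchAt n T U k) := by
  rw [switchAt]
  split_ifs
  exacts [hT k, hU k]

theorem hellingerSq_pathWeight_switchAt_le (hp : p ∈ stdSimplex ℝ E)
    (hT : ∀ k, IsStochastic (T k)) (hU : ∀ k, IsStochastic (U k))
    (hsum : Summable fun k => ∑ s, hellingerSq (T k s) (U k s)) {n k : ℕ} (hk : n ≤ k) :
    hellingerSq (pathWeight p T k) (pathWeight p (switchAt n T U) k)
      ≤ ∑' i, ∑ s, hellingerSq (T (i + n) s) (U (i + n) s) := by
  obtain ⟨j, rfl⟩ := Nat.exists_eq_add_of_le hk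
  calc hellingerSq (pathWeight p T (n + j)) (pathWeight p (switchAt n T U) (n + j))
      ≤ ∑ i ∈ Finset.range (n + j), ∑ s, hellingerSq (T i s) (switchAt n T U i s) :=
        hellingerSq_pathWeight_le hp hT (isStochastic_switchAt hT hU n) (n + j)
    _ = ∑ i ∈ Finset.range j, ∑ s, hellingerSq (T (i + n) s) (U (i + n) s) := by
        rw [Finset.sum_range_add, Finset.sum_eq_zero, zero_add]
        · simp [switchAt, add_comm]
        · intro i hi
          simp [switchAt, Finset.mem_range.1 hi, hellingerSq]
    _ ≤ _ := ((summable_nat_add_iff n).2 hsum).sum_le_tsum _ fun i _ =>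
        Finset.sum_nonneg fun s _ => hellingerSq_nonneg _ _

theorem exists_eventually_sum_pathWeight_le (hp : p ∈ stdSimplex ℝ E) (hq : ∀ s, 0 ≤ q s)
    (hT : ∀ k, IsStochastic (T k)) (hU : ∀ k, IsStochastic (U k)) (hqp : ∀ s, q s = 0 → p s = 0)
    (hUT : ∀ k s t, U k s t = 0 → T k s t = 0)
    (hsum : Summable fun k => ∑ s, hellingerSq (T k s) (U k s)) {ε : ℝ} (hε : 0 < ε) :
    ∃ B, ∀ᶠ k in atTop, ∀ C : Finset (Fin (k + 1) → E),
      ∑ w ∈ C, pathWeight p T k w ≤ B * ∑ w ∈ C, pathWeight q U k w + ε := by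
  obtain ⟨n, hn⟩ := ((tendsto_sum_nat_add fun k => ∑ s, hellingerSq (T k s) (U k s)).eventually
    (gt_mem_nhds (half_pos hε))).exists
  obtain ⟨B, hB⟩ := exists_pathWeight_switchAt_le_mul hp.1 hq (fun k => (hT k).1)
    (fun k => (hU k).1) hqp hUT n
  refine ⟨2 * B, (eventually_ge_atTop n).mono fun k hk C => ?_⟩
  have hclose := hellingerSq_pathWeight_switchAt_le hp hT hU hsum hk
  have hswitch := pathWeight_nonneg hp.1 (fun i => (isStochastic_switchAt hT hU n i).1) k
  calc ∑ w ∈ C, pathWeight p T k w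
      ≤ 2 * ∑ w ∈ C, pathWeight p (switchAt n T U) k w
          + 2 * hellingerSq (pathWeight p T k) (pathWeight p (switchAt n T U) k) :=
        sum_le_two_mul_sum_add C (pathWeight_nonneg hp.1 (fun k => (hT k).1) k) hswitch
    _ ≤ 2 * ∑ w ∈ C, B * pathWeight q U k w + 2 * (ε / 2) := by
        gcongr with w
        · exact hB k hk w
        · exact hclose.trans hn.le
    _ = 2 * B * ∑ w ∈ C, pathWeight q U k w + ε := by
        rw [← Finset.mul_sum]
        ring

variable {Ω : Type*} [mΩ : MeasurableSpace Ω] [mE : MeasurableSpace E]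
  [MeasurableSingletonClass E] {μ ν : Measure Ω} {X : ℕ → Ω → E}

theorem IsMarkovChain.ac_of_summable_hellingerSq [IsFiniteMeasure μ]
    [IsFiniteMeasure ν] (hX : IsMarkovChain μ X p T) (hX' : IsMarkovChain ν X q U)
    (hgen : mΩ ≤ ⨆ k, mE.comap (X k)) (hqp : ∀ s, q s = 0 → p s = 0)
    (hUT : ∀ k s t, U k s t = 0 → T k s t = 0)
    (hsum : Summable fun k => ∑ s, hellingerSq (T k s) (U k s)) : μ ≪ ν := by
  classical
  refine ac_of_forall_exists_measureReal_le (isSetAlgebra_pathAlgebra X)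
    (eq_generateFrom_pathAlgebra hX.measurable hgen) fun ε hε => ?_
  obtain ⟨B, hB⟩ := exists_eventually_sum_pathWeight_le hX.init_mem hX'.init_mem.1 hX.stochastic
    hX'.stochastic hqp hUT hsum hε
  refine ⟨B, fun C hC => ?_⟩
  obtain ⟨k, hk, D, rfl⟩ := (hB.and hC).exists
  have hmeas := measurable_pathPrefix hX.measurable k
  rw [← D.coe_toFinset, measureReal_preimage_eq_sum μ hmeas, measureReal_preimage_eq_sum ν hmeas]
  simpa only [hX.law, hX'.law] using hk D.toFinset

end Switch

section Folding

variable {S : Type*}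

/-- The pair of letters at the two ends of the window `[-k, k]`. -/
def fold (k : ℕ) (x : Seq S) : S × S := (x (-k), x k)

/-- The law of `(x₀, x₀)`: the initial distribution of the folded chain. -/
noncomputable def foldInit (π : ℤ → S → ℝ) : S × S → ℝ :=
  (Set.diagonal S).indicator fun e => π 0 e.1

/-- The transition matrices of the folded chain `k ↦ (x₋ₖ, xₖ)`: its two components are moved
independently, the first one by the reverse transitions. -/
noncomputable def foldTransition (P : ℤ → S → S → ℝ) (π : ℤ → S → ℝ) (k : ℕ) (e e' : S × S) : ℝ :=
  reverseP P π (-k) e.1 e'.1 * P k e.2 e'.2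

theorem pathPrefix_fold_eq_iff {k : ℕ} {x y : Seq S} :
    pathPrefix fold k x = pathPrefix fold k y ↔ ∀ i : Fin (2 * k + 1), x (-k + i) = y (-k + i) := by
  simp only [funext_iff, pathPrefix, fold, Prod.ext_iff]
  constructor
  · intro h i
    rcases le_total (i : ℕ) k with hi | hi
    · simpa [show (-((k - i : ℕ) : ℤ)) = -k + i by lia] using (h ⟨k - i, by lia⟩).1
    · simpa [show ((i - k : ℕ) : ℤ) = -k + i by lia] using (h ⟨i - k, by lia⟩).2
  · intro h i
    have hi := Nat.lt_succ_iff.1 i.2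
    constructor
    · simpa [Nat.cast_sub hi, neg_add_eq_sub] using h ⟨k - i, by lia⟩
    · simpa using h ⟨k + i, by lia⟩

theorem exists_pathPrefix_fold_eq {k : ℕ} {w : Fin (k + 1) → S × S}
    (hw : w 0 ∈ Set.diagonal S) : ∃ x, pathPrefix fold k x = w := by
  refine ⟨fun j => if j ≤ 0 then (w (Fin.ofNat _ j.natAbs)).1 else (w (Fin.ofNat _ j.natAbs)).2,
    funext fun i => ?_⟩
  rcases Nat.eq_zero_or_pos (i : ℕ) with hi | hi
  · obtain rfl : i = 0 := Fin.ext hi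
    exact Prod.ext rfl hw
  · simp [pathPrefix, fold, hi.ne']

theorem mem_diagonal_pathPrefix_fold (k : ℕ) (x : Seq S) :
    pathPrefix fold k x 0 ∈ Set.diagonal S := by
  simp [pathPrefix, fold]

variable {P P' : ℤ → S → S → ℝ} {π π' : ℤ → S → ℝ}

theorem foldInit_eq_zero_of_foldInit_eq_zero (hπ' : ∀ s, π' 0 s ≠ 0) (e : S × S)
    (h : foldInit π' e = 0) : foldInit π e = 0 := by
  refine Set.indicator_of_notMem (fun he => hπ' e.1 ?_) _
  rwa [foldInit, Set.indicator_of_mem he] at h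

theorem reverseP_of_pos (hπ : ∀ n s, 0 < π n s) (n : ℤ) (s t : S) :
    reverseP P π n s t = π (n - 1) t * P (n - 1) t s / π n s :=
  if_pos (hπ n s)

theorem dist_mul_reverseP (hπ : ∀ n s, 0 < π n s) (n : ℤ) (s t : S) :
    π n s * reverseP P π n s t = π (n - 1) t * P (n - 1) t s := by
  rw [reverseP_of_pos hπ, mul_div_cancel₀ _ (hπ n s).ne']

theorem pathWeight_pathPrefix_fold (hπ : ∀ n s, 0 < π n s) (k : ℕ) (x : Seq S) :
    pathWeight (foldInit π) (foldTransition P π) k (pathPrefix fold k x) = π (-k) (x (-k)) *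
      ∏ i ∈ Finset.range (2 * k), P (-k + i) (x (-k + i)) (x (-k + i + 1)) := by
  induction k with
  | zero => simp [pathWeight, foldInit, pathPrefix, fold]
  | succ k ih =>
    have hcast : (-(k + 1 : ℕ) : ℤ) = -k - 1 := by lia
    have hshift : ∀ i : ℕ, (-k - 1 + (i + 1 : ℕ) : ℤ) = -k + i := fun i => by lia
    have hend : (-k + (2 * k : ℕ) : ℤ) = k := by lia
    have hrev := dist_mul_reverseP (P := P) hπ (-k) (x (-k)) (x (-k - 1))
    rw [pathWeight_succ, show 2 * (k + 1) = 2 * k + 1 + 1 by ring, Finset.prod_range_succ,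
      Finset.prod_range_succ']
    change pathWeight _ _ k (pathPrefix fold k x) * foldTransition P π k (fold k x)
      (fold (k + 1) x) = _
    simp only [ih, foldTransition, fold, hcast, hshift, hend, Nat.cast_zero, add_zero,
      sub_add_cancel]
    push_cast
    linear_combination (∏ i ∈ Finset.range (2 * k),
      P (-k + i) (x (-k + i)) (x (-k + i + 1))) * P k (x k) (x (k + 1)) * hrev

variable [MeasurableSpace S]

theorem measurable_fold (k : ℕ) : Measurable (fold k : Seq S → S × S) :=
  (measurable_pi_apply _).prodMk (measurable_pi_apply _)

theorem measurableSpace_le_iSup_comap_fold :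
    (MeasurableSpace.pi : MeasurableSpace (Seq S)) ≤
      ⨆ k, (inferInstance : MeasurableSpace (S × S)).comap (fold k) := by
  refine iSup_le fun n => ?_
  obtain ⟨k, rfl | rfl⟩ := n.eq_nat_or_neg
  · exact le_iSup_of_le k (measurable_snd.comp (comap_measurable (fold k))).comap_le
  · exact le_iSup_of_le k (measurable_fst.comp (comap_measurable (fold k))).comap_le

variable [Fintype S] {μ ν : Measure (Seq S)} {A : S → S → Bool}

theorem IsStochastic.prod {E F : Type*} [Fintype E] [Fintype F] {T : E → E → ℝ} {U : F → F → ℝ}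
    (hT : IsStochastic T) (hU : IsStochastic U) :
    IsStochastic fun e e' : E × F => T e.1 e'.1 * U e.2 e'.2 := by
  refine ⟨fun e e' => mul_nonneg (hT.1 _ _) (hU.1 _ _), fun e => ?_⟩
  simp only [Fintype.sum_prod_type, ← Finset.mul_sum, hU.2, mul_one, hT.2]

theorem IsMarkovMeasure.dist_mem_stdSimplex (hμ : IsMarkovMeasure μ A P π) (n : ℤ) :
    π n ∈ stdSimplex ℝ S :=
  ⟨hμ.dist_nonneg n, hμ.dist_sum n⟩

theorem IsMarkovMeasure.nonempty (hμ : IsMarkovMeasure μ A P π) : Nonempty S :=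
  not_isEmpty_iff.1 fun _ => by simpa using hμ.dist_sum 0

theorem IsMarkovMeasure.exists_pos_forall_le_dist (hμ : IsMarkovMeasure μ A P π)
    (hA : IsPrimitive A) (hD : Doeblin A P) : ∃ c > 0, ∀ n s, c ≤ π n s := by
  obtain ⟨M, -, hM : JoinedIn (fun s t => A s t = true) M⟩ := hA
  obtain ⟨δ, hδ, hPδ⟩ := hD
  have := hμ.nonempty
  have hcard : (0 : ℝ) < Fintype.card S := Nat.cast_pos.2 Fintype.card_pos
  refine ⟨δ ^ M / Fintype.card S, by positivity, fun n s => ?_⟩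
  rw [div_le_iff₀' hcard]
  simpa [hμ.dist_sum] using hM.pow_mul_sum_le (β := fun i => π (n - M + i))
    (R := fun i => P (n - M + i)) hδ.le (hμ.dist_nonneg _) (fun k => (hμ.stochastic _).1)
    (fun k s t => (hPδ _ s t).2)
    (fun k t => by rw [hμ.consistent, Nat.cast_add_one, add_assoc]) s

theorem IsMarkovMeasure.dist_pos (hμ : IsMarkovMeasure μ A P π) (hA : IsPrimitive A)
    (hD : Doeblin A P) (n : ℤ) (s : S) : 0 < π n s := by
  obtain ⟨c, hc, hle⟩ := hμ.exists_pos_forall_le_dist hA hD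
  exact hc.trans_le (hle n s)

theorem IsMarkovMeasure.isStochastic_reverseP (hμ : IsMarkovMeasure μ A P π)
    (hπ : ∀ n s, 0 < π n s) (n : ℤ) : IsStochastic (reverseP P π n) := by
  refine ⟨fun s t => ?_, fun s => ?_⟩ <;> simp only [reverseP_of_pos hπ]
  · exact div_nonneg (mul_nonneg (hπ _ _).le ((hμ.stochastic _).1 _ _)) (hπ n s).le
  · rw [← Finset.sum_div, hμ.consistent, sub_add_cancel, div_self (hπ n s).ne']

theorem IsMarkovMeasure.sum_dist_mul_reverseP (hμ : IsMarkovMeasure μ A P π)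
    (hπ : ∀ n s, 0 < π n s) (n : ℤ) (t : S) :
    ∑ s, π n s * reverseP P π n s t = π (n - 1) t := by
  simp only [dist_mul_reverseP hπ, ← Finset.mul_sum, (hμ.stochastic _).2, mul_one]

theorem IsMarkovMeasure.exists_pos_forall_le_reverseP (hμ : IsMarkovMeasure μ A P π)
    (hA : IsPrimitive A) (hD : Doeblin A P) :
    ∃ δ > 0, ∀ n s t, A t s = true → δ ≤ reverseP P π n s t := by
  obtain ⟨c, hc, hcπ⟩ := hμ.exists_pos_forall_le_dist hA hD
  have hπ := hμ.dist_pos hA hD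
  obtain ⟨δ, hδ, hPδ⟩ := hD
  refine ⟨c * δ, by positivity, fun n s t hts => ?_⟩
  rw [reverseP_of_pos hπ, le_div_iff₀ (hπ n s)]
  calc c * δ * π n s ≤ c * δ := mul_le_of_le_one_right (by positivity)
        (mem_Icc_of_mem_stdSimplex (hμ.dist_mem_stdSimplex n) s).2
    _ ≤ _ := mul_le_mul (hcπ _ _) ((hPδ _ _ _).2 hts) hδ.le (hπ _ _).le

theorem IsMarkovMeasure.exists_pos_forall_le_foldTransition (hμ : IsMarkovMeasure μ A P π)
    (hA : IsPrimitive A) (hD : Doeblin A P) :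
    ∃ δ > 0, ∀ k e e', A e'.1 e.1 = true ∧ A e.2 e'.2 = true → δ ≤ foldTransition P π k e e' := by
  obtain ⟨δ₁, hδ₁, h₁⟩ := hμ.exists_pos_forall_le_reverseP hA hD
  obtain ⟨δ₂, hδ₂, h₂⟩ := hD
  exact ⟨δ₁ * δ₂, mul_pos hδ₁ hδ₂, fun k e e' h => mul_le_mul (h₁ _ _ _ h.1) ((h₂ _ _ _).2 h.2)
    hδ₂.le (hδ₁.le.trans (h₁ _ _ _ h.1))⟩

theorem IsMarkovMeasure.foldTransition_eq_zero (hμ : IsMarkovMeasure μ A P π) {k : ℕ}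
    {e e' : S × S} (h : ¬(A e'.1 e.1 = true ∧ A e.2 e'.2 = true)) :
    foldTransition P π k e e' = 0 := by
  rw [not_and_or, Bool.not_eq_true, Bool.not_eq_true] at h
  rcases h with h | h <;> simp [foldTransition, reverseP, hμ.compat _ _ _ h]

theorem IsMarkovMeasure.foldTransition_eq_zero_of_foldTransition_eq_zero
    (hμ : IsMarkovMeasure μ A P π) (hν : IsMarkovMeasure ν A P' π') (hA : IsPrimitive A)
    (hD' : Doeblin A P') (k : ℕ) (e e' : S × S) (h : foldTransition P' π' k e e' = 0) :
    foldTransition P π k e e' = 0 := by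
  obtain ⟨δ, hδ, hle⟩ := hν.exists_pos_forall_le_foldTransition hA hD'
  exact hμ.foldTransition_eq_zero fun hadj => (hδ.trans_le (hle k e e' hadj)).ne' h

theorem IsMarkovMeasure.foldInit_mem_stdSimplex (hμ : IsMarkovMeasure μ A P π) :
    foldInit π ∈ stdSimplex ℝ (S × S) := by
  refine ⟨fun e => Set.indicator_nonneg (fun e _ => hμ.dist_nonneg 0 e.1) e, ?_⟩
  classical
  simp [foldInit, Fintype.sum_prod_type, Set.indicator_apply, hμ.dist_sum]

theorem IsMarkovMeasure.measureReal_fold_preimage (hμ : IsMarkovMeasure μ A P π)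
    (hπ : ∀ n s, 0 < π n s) (k : ℕ) (w : Fin (k + 1) → S × S) :
    μ.real (pathPrefix fold k ⁻¹' {w}) = pathWeight (foldInit π) (foldTransition P π) k w := by
  by_cases hw : w 0 ∈ Set.diagonal S
  · obtain ⟨x, rfl⟩ := exists_pathPrefix_fold_eq hw
    have hwindow : pathPrefix fold k ⁻¹' {pathPrefix fold k x} = {y | ∀ i : Fin (2 * k + 1),
        y (-k - 1 + 1 + (i : ℕ)) = x (-k + (i : ℕ))} := by
      ext y
      simp only [sub_add_cancel]
      exact pathPrefix_fold_eq_iff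
    rw [measureReal_def, hwindow, hμ.cylinder (-k - 1) (2 * k) fun i => x (-k + (i : ℕ)),
      ENNReal.toReal_ofReal, pathWeight_pathPrefix_fold hπ,
      ← Fin.prod_univ_eq_prod_range fun i => P (-k + i) (x (-k + i)) (x (-k + i + 1))]
    · simp [add_assoc]
    · exact mul_nonneg (hμ.dist_nonneg _ _)
        (Finset.prod_nonneg fun i _ => (hμ.stochastic _).1 _ _)
  · have hempty : pathPrefix fold k ⁻¹' {w} = ∅ := Set.eq_empty_of_forall_notMem fun x hx =>
      hw (hx ▸ mem_diagonal_pathPrefix_fold k x)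
    simp [hempty, pathWeight, foldInit, hw]

theorem IsMarkovMeasure.isMarkovChain_fold (hμ : IsMarkovMeasure μ A P π)
    (hπ : ∀ n s, 0 < π n s) : IsMarkovChain μ fold (foldInit π) (foldTransition P π) where
  measurable := measurable_fold
  init_mem := hμ.foldInit_mem_stdSimplex
  stochastic k := (hμ.isStochastic_reverseP hπ (-k)).prod (hμ.stochastic k)
  law := hμ.measureReal_fold_preimage hπ

end Folding

section Limits

variable {S : Type*} {P : ℤ → S → S → ℝ} {π : ℤ → S → ℝ} {Q : S → S → ℝ} {lam : S → ℝ}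

theorem reverseP_const (hlam : ∀ s, 0 < lam s) (n : ℤ) :
    reverseP (fun _ => Q) (fun _ => lam) n = reverseQ Q lam := by
  ext s t
  exact reverseP_of_pos (fun _ => hlam) n s t

theorem foldTransition_const (hlam : ∀ s, 0 < lam s) (k : ℕ) :
    foldTransition (fun _ => Q) (fun _ => lam) k =
      fun e e' => reverseQ Q lam e.1 e'.1 * Q e.2 e'.2 := by
  ext e e'
  rw [foldTransition, reverseP_const hlam]

theorem tendsto_neg_of_tendsto_reverseP (hπ : ∀ n s, 0 < π n s) (hlam : ∀ s, 0 < lam s)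
    (hrev : Tendsto (fun n : ℕ => reverseP P π (-n)) atTop (𝓝 (reverseQ Q lam)))
    (hdist : Tendsto (fun n : ℕ => π (-n)) atTop (𝓝 lam)) :
    Tendsto (fun n : ℕ => P (-n)) atTop (𝓝 Q) := by
  refine (tendsto_add_atTop_iff_nat 1).1
    (tendsto_pi_nhds.2 fun s => tendsto_pi_nhds.2 fun t => ?_)
  have hdist' := tendsto_pi_nhds.1 hdist
  have hlim := ((hdist' t).mul (tendsto_pi_nhds.1 (tendsto_pi_nhds.1 hrev t) s)).div
    ((tendsto_add_atTop_iff_nat 1).2 (hdist' s)) (hlam s).ne'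
  rw [← reverseP_const hlam 0, dist_mul_reverseP fun _ => hlam,
    mul_div_cancel_left₀ _ (hlam s).ne'] at hlim
  refine hlim.congr fun n => ?_
  have hn : (-(n + 1 : ℕ) : ℤ) = -n - 1 := by lia
  rw [Pi.div_apply, dist_mul_reverseP hπ, hn, mul_div_cancel_left₀ _ (hπ _ s).ne']

theorem tendsto_of_tendsto_mul_isStochastic {α E F : Type*} [Fintype F] [Nonempty F]
    {l : Filter α} {T : α → E → E → ℝ} {U : α → F → F → ℝ} {B : E → E → ℝ} {C : F → F → ℝ}
    (hU : ∀ n, IsStochastic (U n)) (hC : IsStochastic C)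
    (h : ∀ s s' t t', Tendsto (fun n => T n s s' * U n t t') l (𝓝 (B s s' * C t t'))) :
    Tendsto T l (𝓝 B) := by
  obtain ⟨t⟩ := ‹Nonempty F›
  refine tendsto_pi_nhds.2 fun s => tendsto_pi_nhds.2 fun s' => ?_
  have hsum := tendsto_finsetSum Finset.univ fun t' _ => h s s' t t'
  simpa only [← Finset.mul_sum, (hU _).2, hC.2, mul_one] using hsum

variable [Fintype S]

theorem summable_hellingerSq_foldTransition_iff (hlam : ∀ s, 0 < lam s) :
    (Summable fun k => ∑ e, hellingerSq (foldTransition P π k e)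
        (foldTransition (fun _ => Q) (fun _ => lam) k e)) ↔
      Summable fun n : ℕ => ∑ s, ∑ u, ∑ v, ∑ t,
        (√(reverseP P π (-((n : ℤ) + 1)) u s * P ((n : ℤ) + 1) v t)
          - √(reverseQ Q lam u s * Q v t)) ^ 2 := by
  rw [← summable_nat_add_iff 1]
  refine summable_congr fun n => ?_
  simp only [hellingerSq, foldTransition, reverseP_const hlam, Fintype.sum_prod_type,
    Nat.cast_add_one]
  rw [Finset.sum_comm_cycle]

variable [MeasurableSpace S] {μ ν : Measure (Seq S)} {A : S → S → Bool}

theorem tendsto_foldTransition_of_summable (hμ : IsMarkovMeasure μ A P π)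
    (hν : IsMarkovMeasure ν A (fun _ => Q) (fun _ => lam)) (hπ : ∀ n s, 0 < π n s)
    (hlam : ∀ s, 0 < lam s)
    (hsum : Summable fun k => ∑ e, hellingerSq (foldTransition P π k e)
      (foldTransition (fun _ => Q) (fun _ => lam) k e)) (e e' : S × S) :
    Tendsto (fun k => foldTransition P π k e e') atTop
      (𝓝 (reverseQ Q lam e.1 e'.1 * Q e.2 e'.2)) := by
  have hX := hμ.isMarkovChain_fold hπ
  have hB := (hν.isMarkovChain_fold fun _ => hlam).stochastic 0
  simp only [foldTransition_const hlam] at hsum hB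
  refine tendsto_pi_nhds.1 (tendsto_of_tendsto_hellingerSq (fun k => (hX.stochastic k).1 e)
    (hB.1 e) ?_) e'
  refine squeeze_zero (fun k => hellingerSq_nonneg _ _) (fun k => ?_) hsum.tendsto_atTop_zero
  exact Finset.single_le_sum (f := fun e => hellingerSq (foldTransition P π k e) fun e' =>
    reverseQ Q lam e.1 e'.1 * Q e.2 e'.2) (fun e _ => hellingerSq_nonneg _ _) (Finset.mem_univ e)

theorem IsMarkovMeasure.tendsto_dist_neg (hμ : IsMarkovMeasure μ A P π)
    (hν : IsMarkovMeasure ν A (fun _ => Q) (fun _ => lam)) (hA : IsPrimitive A)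
    (hDQ : Doeblin A fun _ => Q) (hπ : ∀ n s, 0 < π n s)
    (h : Tendsto (fun n : ℕ => reverseP P π (-n)) atTop (𝓝 (reverseQ Q lam))) :
    Tendsto (fun n : ℕ => π (-n)) atTop (𝓝 lam) := by
  have hlam := hν.dist_pos hA hDQ 0
  obtain ⟨δ, hδ, hBδ⟩ := hν.exists_pos_forall_le_reverseP hA hDQ
  obtain ⟨M, -, hM : JoinedIn (fun s t => A s t = true) M⟩ := hA
  rw [← reverseP_const hlam 0] at h
  exact tendsto_stationary (hν.isStochastic_reverseP (fun _ => hlam) 0) (hν.dist_mem_stdSimplex 0)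
    (funext (hν.sum_dist_mul_reverseP (fun _ => hlam) 0)) hM.swap hδ (hBδ 0)
    (fun n => hμ.dist_mem_stdSimplex _) h fun n => funext fun t => by
      rw [Nat.cast_add_one, neg_add]
      exact hμ.sum_dist_mul_reverseP hπ (-n) t

theorem IsMarkovMeasure.tendsto_of_summable (hμ : IsMarkovMeasure μ A P π)
    (hν : IsMarkovMeasure ν A (fun _ => Q) (fun _ => lam)) (hA : IsPrimitive A)
    (hD : Doeblin A P) (hDQ : Doeblin A fun _ => Q)
    (hsum : Summable fun k => ∑ e, hellingerSq (foldTransition P π k e)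
      (foldTransition (fun _ => Q) (fun _ => lam) k e)) :
    Tendsto (fun n : ℕ => P n) atTop (𝓝 Q) ∧ Tendsto (fun n : ℕ => P (-n)) atTop (𝓝 Q) := by
  have := hμ.nonempty
  have hπ := hμ.dist_pos hA hD
  have hlam := hν.dist_pos hA hDQ 0
  have hfold := tendsto_foldTransition_of_summable hμ hν hπ hlam hsum
  have hB := hν.isStochastic_reverseP (fun _ => hlam) 0
  rw [reverseP_const hlam] at hB
  have hrev : Tendsto (fun n : ℕ => reverseP P π (-n)) atTop (𝓝 (reverseQ Q lam)) :=
    tendsto_of_tendsto_mul_isStochastic (fun n => hμ.stochastic n) (hν.stochastic 0)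
      fun s s' t t' => hfold (s, t) (s', t')
  have hfwd : Tendsto (fun n : ℕ => P n) atTop (𝓝 Q) :=
    tendsto_of_tendsto_mul_isStochastic (fun n => hμ.isStochastic_reverseP hπ (-n)) hB
      fun s s' t t' => by simpa only [foldTransition, mul_comm] using hfold (t, s) (t', s')
  exact ⟨hfwd, tendsto_neg_of_tendsto_reverseP hπ hlam hrev
    (hμ.tendsto_dist_neg hν hA hDQ hπ hrev)⟩

end Limits

section Criterion

variable {S : Type*} [Fintype S] [MeasurableSpace S] [MeasurableSingletonClass S]
  {μ ν : Measure (Seq S)} {A : S → S → Bool} {P P' : ℤ → S → S → ℝ} {π π' : ℤ → S → ℝ}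
  {Q : S → S → ℝ} {lam : S → ℝ}

theorem IsMarkovMeasure.absolutelyContinuous_iff_summable
    (hμ : IsMarkovMeasure μ A P π) (hν : IsMarkovMeasure ν A P' π') (hA : IsPrimitive A)
    (hD : Doeblin A P) (hD' : Doeblin A P') :
    μ ≪ ν ↔ Summable fun k =>
      ∑ e, hellingerSq (foldTransition P π k e) (foldTransition P' π' k e) := by
  have := hμ.isProb
  have := hν.isProb
  have hπ' := hν.dist_pos hA hD'
  have hX := hμ.isMarkovChain_fold (hμ.dist_pos hA hD)
  have hX' := hν.isMarkovChain_fold hπ'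
  constructor
  · obtain ⟨δ, hδ, hTδ⟩ := hμ.exists_pos_forall_le_foldTransition hA hD
    obtain ⟨δ', hδ', hUδ⟩ := hν.exists_pos_forall_le_foldTransition hA hD'
    obtain ⟨M, -, hM : JoinedIn (fun s t => A s t = true) M⟩ := hA
    exact hX.summable_hellingerSq_of_ac hX' (hM.swap.prod hM) (lt_min hδ hδ')
      (fun k s t h => (min_le_left _ _).trans (hTδ k s t h))
      (fun k s t h => (min_le_right _ _).trans (hUδ k s t h))
  · exact hX.ac_of_summable_hellingerSq hX' measurableSpace_le_iSup_comap_fold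
      (foldInit_eq_zero_of_foldInit_eq_zero fun s => (hπ' 0 s).ne')
      (hμ.foldTransition_eq_zero_of_foldTransition_eq_zero hν hA hD')

theorem equivalent_to_homogeneous_iff_general (hμ : IsMarkovMeasure μ A P π)
    (hν : IsMarkovMeasure ν A (fun _ => Q) (fun _ => lam)) (hA : IsPrimitive A)
    (hD : Doeblin A P) (hDQ : Doeblin A fun _ => Q) :
    (μ ≪ ν →
      Tendsto (fun n : ℕ => P n) atTop (𝓝 Q) ∧ Tendsto (fun n : ℕ => P (-n)) atTop (𝓝 Q)) ∧
    List.TFAE [μ ≪ ν, ν ≪ μ, Summable fun n : ℕ => ∑ s, ∑ u, ∑ v, ∑ t,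
      (√(reverseP P π (-((n : ℤ) + 1)) u s * P ((n : ℤ) + 1) v t)
        - √(reverseQ Q lam u s * Q v t)) ^ 2] := by
  have hiff := hμ.absolutelyContinuous_iff_summable hν hA hD hDQ
  have hiff' := hν.absolutelyContinuous_iff_summable hμ hA hDQ hD
  simp only [hellingerSq_comm (foldTransition (fun _ => Q) _ _ _)] at hiff'
  refine ⟨fun h => hμ.tendsto_of_summable hν hA hD hDQ (hiff.1 h), ?_⟩
  rw [← summable_hellingerSq_foldTransition_iff (hν.dist_pos hA hDQ 0)]
  tfae_have 1 ↔ 3 := hiff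
  tfae_have 2 ↔ 3 := hiff'
  tfae_finish

end Criterion

/-- **Corollary (equivalence to a homogeneous Markov measure).**
Let `μ` be a Markov measure with the Doeblin condition on a topologically mixing
SFT, and `ν` the homogeneous Markov measure of a stochastic matrix `Q` (compatible
with `A`, with the Doeblin condition) and its stationary distribution `λ`.
Then a necessary condition for `μ ~ ν` is `lim_{|n|→∞} P_n = Q`; and if this limit
condition holds, then `μ ~ ν` iff
`Σ_{n≥1} Σ_{s,u,v,t} (√(P̂_{-n}(u,s) P_n(v,t)) − √(Q̂(u,s) Q(v,t)))² < ∞`. -/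
theorem equivalent_to_homogeneous_iff
    {S : Type*} [Fintype S] [MeasurableSpace S] [MeasurableSingletonClass S]
    (A : S → S → Bool) (hA : IsPrimitive A)
    (P : ℤ → S → S → ℝ) (π : ℤ → S → ℝ) (μ : Measure (Seq S))
    (hμ : IsMarkovMeasure μ A P π) (hD : Doeblin A P)
    (Q : S → S → ℝ) (lam : S → ℝ) (ν : Measure (Seq S))
    (hν : IsMarkovMeasure ν A (fun _ => Q) (fun _ => lam))
    (hDQ : Doeblin A (fun _ => Q)) :
    ((μ ≪ ν ∧ ν ≪ μ) →
      Tendsto (fun n : ℕ => P (n : ℤ)) atTop (𝓝 Q) ∧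
      Tendsto (fun n : ℕ => P (-(n : ℤ))) atTop (𝓝 Q)) ∧
    ((Tendsto (fun n : ℕ => P (n : ℤ)) atTop (𝓝 Q) ∧
      Tendsto (fun n : ℕ => P (-(n : ℤ))) atTop (𝓝 Q)) →
      ((μ ≪ ν ∧ ν ≪ μ) ↔
        Summable (fun n : ℕ => ∑ s : S, ∑ u : S, ∑ v : S, ∑ t : S,
          (Real.sqrt (reverseP P π (-((n : ℤ) + 1)) u s * P ((n : ℤ) + 1) v t)
            - Real.sqrt (reverseQ Q lam u s * Q v t)) ^ 2))) := by
  obtain ⟨hlim, htfae⟩ := equivalent_to_homogeneous_iff_general hμ hν hA hD hDQ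
  exact ⟨fun h => hlim h.1, fun _ => ⟨fun h => (htfae.out 0 2).1 h.1,
    fun h => ⟨(htfae.out 0 2).2 h, (htfae.out 1 2).2 h⟩⟩⟩

end MarkovSFT
end

section
/- Let (a_n : n ≥ 1) be a sequence of non-negative real numbers with Σ_{n≥1} a_n = ∞, let (Ω, ℙ) be a probability space, and let (A_n : n ≥ 1) be a sequence of measurable events in Ω. Then ℙ( Σ_{n≥1} a_n · 1_{A_n} = ∞ ) ≥ liminf_{n→∞} ℙ(A_n). -/
/-!
Let `S = ∑ aₙ 1_{Aₙ}`. If `S` is integrable over an event `B`, then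
`∑ aₙ ℙ(Aₙ ∩ B) = ∫_B S < ∞`, and since `∑ aₙ = ∞` this forces `ℙ(Aₙ ∩ B)` to be arbitrarily small
for infinitely many `n`; hence `liminf ℙ(Aₙ) ≤ ℙ(Bᶜ)`. Take `B = {S ≤ M}` and let `M → ∞`.
-/

open MeasureTheory Filter Topology

namespace ProbabilisticLemma

open scoped ENNReal NNReal

section Weights

variable {ι : Type*} {w : ι → ℝ≥0}

lemma tsum_compl_eq_top_of_not_summable (hw : ¬ Summable w) {s : Set ι} (hs : s.Finite) :
    ∑' i : ↥sᶜ, (w i : ℝ≥0∞) = ⊤ := by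
  contrapose! hw
  have hcompl : Summable fun i : ↥sᶜ => w i := ENNReal.tsum_coe_ne_top_iff_summable.1 hw
  rw [← NNReal.summable_coe] at hcompl ⊢
  exact hs.summable_compl_iff.1 hcompl

lemma frequently_lt_of_tsum_mul_ne_top (hw : ¬ Summable w) {x : ι → ℝ≥0∞}
    (hx : ∑' i, w i * x i ≠ ⊤) {ε : ℝ≥0∞} (hε : ε ≠ 0) : ∃ᶠ i in cofinite, x i < ε := by
  by_contra hfreq
  have hfin : {i | x i < ε}.Finite :=
    Set.not_infinite.1 (mt frequently_cofinite_iff_infinite.2 hfreq)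
  refine hx (top_le_iff.1 ?_)
  calc
    ⊤ = ∑' i : ↥{i | x i < ε}ᶜ, w i * ε := by
      rw [ENNReal.tsum_mul_right, tsum_compl_eq_top_of_not_summable hw hfin, ENNReal.top_mul hε]
    _ ≤ ∑' i : ↥{i | x i < ε}ᶜ, w i * x i :=
      ENNReal.tsum_le_tsum fun ⟨i, hi⟩ => by gcongr; exact le_of_not_gt hi
    _ ≤ ∑' i, w i * x i :=
      ENNReal.tsum_comp_le_tsum_of_injective Subtype.val_injective fun i => w i * x i

end Weights

section Measure

variable {Ω ι : Type*} [MeasurableSpace Ω] {μ : Measure Ω}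

lemma measure_eq_top_eq_iInf_measure_natCast_lt [IsFiniteMeasure μ] {f : Ω → ℝ≥0∞}
    (hf : AEMeasurable f μ) : μ {ω | f ω = ⊤} = ⨅ M : ℕ, μ {ω | M < f ω} := by
  have hanti : Antitone fun M : ℕ => f ⁻¹' Set.Ioi (M : ℝ≥0∞) :=
    fun _ _ hMN => Set.preimage_mono (Set.Ioi_subset_Ioi (Nat.cast_le.2 hMN))
  calc
    μ (f ⁻¹' {⊤}) = μ (⋂ M : ℕ, f ⁻¹' Set.Ioi (M : ℝ≥0∞)) := by
      rw [← Set.preimage_iInter, ENNReal.iInter_Ioi_coe_nat]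
    _ = ⨅ M : ℕ, μ (f ⁻¹' Set.Ioi (M : ℝ≥0∞)) :=
      hanti.measure_iInter (fun _ => hf.nullMeasurableSet_preimage measurableSet_Ioi)
        ⟨0, measure_ne_top _ _⟩

variable [Countable ι] {A : ι → Set Ω}

lemma aemeasurable_tsum_indicator_const (hA : ∀ i, NullMeasurableSet (A i) μ) (c : ι → ℝ≥0∞) :
    AEMeasurable (fun ω => ∑' i, (A i).indicator (fun _ => c i) ω) μ :=
  AEMeasurable.tsum fun i => aemeasurable_const.indicator₀ (hA i)

lemma lintegral_tsum_indicator_const (hA : ∀ i, NullMeasurableSet (A i) μ) (c : ι → ℝ≥0∞) :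
    ∫⁻ ω, ∑' i, (A i).indicator (fun _ => c i) ω ∂μ = ∑' i, c i * μ (A i) := by
  rw [lintegral_tsum fun i => aemeasurable_const.indicator₀ (hA i)]
  exact tsum_congr fun i => lintegral_indicator_const₀ (hA i) (c i)

variable {w : ι → ℝ≥0}

lemma liminf_measure_le_measure_compl_of_setLIntegral_ne_top (hw : ¬ Summable w)
    (hA : ∀ i, NullMeasurableSet (A i) μ) {B : Set Ω}
    (hB : ∫⁻ ω in B, ∑' i, (A i).indicator (fun _ => (w i : ℝ≥0∞)) ω ∂μ ≠ ⊤) :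
    liminf (fun i => μ (A i)) cofinite ≤ μ Bᶜ := by
  rw [lintegral_tsum_indicator_const fun i => (hA i).mono Measure.restrict_le_self] at hB
  refine ENNReal.le_of_forall_pos_le_add fun ε hε _ => ?_
  have hsmall : ∃ᶠ i in cofinite, μ.restrict B (A i) < ε :=
    frequently_lt_of_tsum_mul_ne_top hw hB (ENNReal.coe_pos.2 hε).ne'
  refine liminf_le_of_frequently_le' (hsmall.mono fun i hi => ?_)
  calc
    μ (A i) ≤ μ (A i \ B) + μ (A i ∩ B) :=
      (measure_le_inter_add_sdiff μ (A i) B).trans_eq (add_comm _ _)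
    _ ≤ μ Bᶜ + μ.restrict B (A i) :=
      add_le_add (measure_mono fun _ hω => hω.2) (Measure.le_restrict_apply B (A i))
    _ ≤ μ Bᶜ + ε := by gcongr

theorem liminf_le_prob_sum_indicator_eq_top_general [IsFiniteMeasure μ] (hw : ¬ Summable w)
    (hA : ∀ i, NullMeasurableSet (A i) μ) :
    liminf (fun i => μ (A i)) cofinite ≤
      μ {ω | ∑' i, (A i).indicator (fun _ => (w i : ℝ≥0∞)) ω = ⊤} := by
  rw [measure_eq_top_eq_iInf_measure_natCast_lt (aemeasurable_tsum_indicator_const hA _)]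
  refine le_iInf fun M => ?_
  have hfinite : ∫⁻ ω in {ω | (M : ℝ≥0∞) < ∑' i, (A i).indicator (fun _ => (w i : ℝ≥0∞)) ω}ᶜ,
      ∑' i, (A i).indicator (fun _ => (w i : ℝ≥0∞)) ω ∂μ < ⊤ :=
    setLIntegral_lt_top_of_le_nnreal (measure_ne_top _ _) ⟨M, fun _ hω => not_lt.1 hω⟩
  simpa only [compl_compl] using
    liminf_measure_le_measure_compl_of_setLIntegral_ne_top hw hA hfinite.ne

end Measure

/-- **Probabilistic lemma.**
If `(a_n)` are non-negative with `Σ a_n = ∞` and `(A_n)` are events in a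
probability space `(Ω, ℙ)`, then
`ℙ(Σ a_n 1_{A_n} = ∞) ≥ liminf ℙ(A_n)`. -/
theorem liminf_le_prob_sum_indicator_eq_top
    {Ω : Type*} [MeasurableSpace Ω] (ℙ : Measure Ω) [IsProbabilityMeasure ℙ]
    (a : ℕ → ℝ) (ha : ∀ n, 0 ≤ a n) (hdiv : ¬ Summable a)
    (A : ℕ → Set Ω) (hA : ∀ n, MeasurableSet (A n)) :
    Filter.liminf (fun n : ℕ => ℙ (A n)) atTop
      ≤ ℙ {ω : Ω | ∑' n : ℕ,
          Set.indicator (A n) (fun _ => ENNReal.ofReal (a n)) ω = ⊤} := by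
  lift a to ℕ → ℝ≥0 using ha
  simpa only [ENNReal.ofReal_coe_nnreal, Nat.cofinite_eq_atTop] using
    liminf_le_prob_sum_indicator_eq_top_general (mt NNReal.summable_coe.2 hdiv)
      fun n => (hA n).nullMeasurableSet (μ := ℙ)

end ProbabilisticLemma
end

section
/- Let (X_A, μ) be a topologically mixing Markov subshift of finite type satisfying the Doeblin condition, and suppose the left shift T is nonsingular with respect to μ. Let V : B(i) ⇌ B'(j) be an (asymmetric) admissible permutation associated with an admissible pair (B, B') and coordinates i, j ∈ ℤ with |i − j| ≥ Length(B,B'). Then for μ-a.e. x in the domain B(i) ∩ B'(j) of V, the ratio of Radon–Nikodym derivatives (d(μ∘T^n∘V)/dμ)(x) / (d(μ∘T^n)/dμ)(x) converges to 1 as |n| → ∞; the same holds for symmetric admissible permutations V : B(i) ⟲ B'(j) on their domains. In other words, every admissible permutation belongs to the renormalization pseudo full-group of the shift with respect to the finite-coordinate-change equivalence relation. -/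
/-!
Let `V` exchange the blocks `B` and `B'`. They have the same first and the same last symbol, so `V`
changes only the transitions inside the two blocks, and on `B(i) ∩ B'(j)` it multiplies the Markov
measure `μ ∘ Tⁿ`, whose transition matrices are `P_{k-n}`, by a constant: a quotient of transition
probabilities along the blocks. The ratio of Radon–Nikodym derivatives is a.e. equal to this
constant, and `B'(i) ∩ B(j)` is treated by interchanging `B` and `B'`.

By the Doeblin lower bound the constant tends to `1` once `P_{k+1}(s,t) - P_k(s,t) → 0` as
`|k| → ∞`. The functions `f_k(y) = 1[y_k = s] (1[y_{k+1} = t] - P_k(s,t))` are bounded and, by the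
Markov property, pairwise orthogonal in `L²(μ)`; by Bessel's inequality and density they tend to
zero weakly against every function in `L¹(μ)`. Testing them against the density of the shifted
measure, which exists by nonsingularity, gives `π_{k+1}(s) (P_{k+1}(s,t) - P_k(s,t)) → 0`, and
primitivity bounds `π_{k+1}(s)` away from zero.
-/

open MeasureTheory Filter Topology

namespace MarkovSFT

/-- The cylinder set where the block `B` (of length `L`) occupies the
coordinates `i, …, i+L-1`. -/
def cylOf {S : Type*} (B : ℕ → S) (L : ℕ) (i : ℤ) : Set (Seq S) :=
  {x | ∀ l : ℕ, l < L → x (i + (l : ℤ)) = B l}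

/-- Replace the coordinates `i, …, i+L-1` with the block `B'` and the coordinates
`j, …, j+L-1` with the block `B`. -/
def swapBlocks {S : Type*} (B B' : ℕ → S) (L : ℕ) (i j : ℤ) (x : Seq S) : Seq S :=
  fun k =>
    if i ≤ k ∧ k < i + (L : ℤ) then B' (k - i).toNat
    else if j ≤ k ∧ k < j + (L : ℤ) then B (k - j).toNat
    else x k

open scoped Classical in
/-- The symmetric admissible permutation `V : B(i) ⟲ B'(j)`: it exchanges the
blocks `B` and `B'` between coordinates `i` and `j` on
`(B(i) ∩ B'(j)) ∪ (B'(i) ∩ B(j))` and is the identity elsewhere. On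
`B(i) ∩ B'(j)` it coincides with the asymmetric admissible permutation
`V : B(i) ⇌ B'(j)`. -/
noncomputable def symSwap {S : Type*} (B B' : ℕ → S) (L : ℕ) (i j : ℤ)
    (x : Seq S) : Seq S :=
  if x ∈ cylOf B L i ∩ cylOf B' L j then swapBlocks B B' L i j x
  else if x ∈ cylOf B' L i ∩ cylOf B L j then swapBlocks B' B L i j x
  else x

/-! ### Weak convergence of bounded orthogonal families -/

lemma tendsto_inner_of_pairwise_orthogonal {𝕜 E ι : Type*} [RCLike 𝕜] [NormedAddCommGroup E]
    [InnerProductSpace 𝕜 E] {u : ι → E} {C : ℝ} (hu : ∀ k, ‖u k‖ ≤ C)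
    (horth : Pairwise fun k l => inner 𝕜 (u k) (u l) = 0) (h : E) :
    Tendsto (fun k => inner 𝕜 (u k) h) cofinite (𝓝 0) := by
  let v : {k // u k ≠ 0} → E := fun k => ((‖u k‖⁻¹ : ℝ) : 𝕜) • u k
  have hv : Orthonormal 𝕜 v := by
    refine ⟨fun k => ?_, fun k l hkl => ?_⟩
    · rw [norm_smul, RCLike.norm_ofReal, abs_inv, abs_norm,
        inv_mul_cancel₀ (norm_ne_zero_iff.2 k.2)]
    · simp only [v, inner_smul_left, inner_smul_right, horth (Subtype.coe_injective.ne hkl),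
        mul_zero]
  have inner_u (k : {k // u k ≠ 0}) : ‖inner 𝕜 (u k) h‖ = ‖u k‖ * ‖inner 𝕜 (v k) h‖ := by
    rw [inner_smul_left, norm_mul, RCLike.norm_conj, RCLike.norm_ofReal, abs_inv, abs_norm,
      mul_inv_cancel_left₀ (norm_ne_zero_iff.2 k.2)]
  have hsum : Summable fun k => ‖inner 𝕜 (u k) h‖ ^ 2 := by
    refine (Subtype.coe_injective (p := fun k => u k ≠ 0)).summable_iff (fun k hk => ?_) |>.1 ?_
    · have : u k = 0 := by simpa using hk
      simp [this]
    · refine (hv.inner_products_summable (x := h)).mul_left (C ^ 2) |>.of_nonneg_of_le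
        (fun k => sq_nonneg _) fun k => ?_
      rw [Function.comp_apply, inner_u, mul_pow]
      gcongr
      exact hu k
  rw [tendsto_zero_iff_norm_tendsto_zero]
  simpa using hsum.tendsto_cofinite_zero.sqrt

section

variable {Ω ι : Type*} [MeasurableSpace Ω] {ν : Measure Ω} [IsFiniteMeasure ν] {f : ι → Ω → ℝ}
  {C : ℝ}

lemma tendsto_integral_mul_of_orthogonal_of_memLp_two
    (hf : ∀ k, AEStronglyMeasurable (f k) ν) (hC : ∀ k, ∀ᵐ x ∂ν, ‖f k x‖ ≤ C)
    (horth : Pairwise fun k l => ∫ x, f k x * f l x ∂ν = 0) {g : Ω → ℝ} (hg : MemLp g 2 ν) :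
    Tendsto (fun k => ∫ x, f k x * g x ∂ν) cofinite (𝓝 0) := by
  have hfL (k) : MemLp (f k) 2 ν := .of_bound (hf k) C (hC k)
  have inner_toLp (k) {w : Ω → ℝ} (hw : MemLp w 2 ν) :
      inner ℝ ((hfL k).toLp (f k)) (hw.toLp w) = ∫ x, f k x * w x ∂ν := by
    rw [L2.inner_def]
    refine integral_congr_ae ?_
    filter_upwards [(hfL k).coeFn_toLp, hw.coeFn_toLp] with x hfx hwx
    rw [hfx, hwx, Real.inner_apply]
  simp only [← inner_toLp _ hg]
  have norm_toLp_le (k) :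
      ‖(hfL k).toLp (f k)‖ ≤ measureUnivNNReal ν ^ (2 : ENNReal).toReal⁻¹ * max C 0 := by
    refine Lp.norm_le_of_ae_bound (le_max_right C 0) ?_
    filter_upwards [(hfL k).coeFn_toLp, hC k] with x hfx hx
    exact hfx ▸ hx.trans (le_max_left C 0)
  exact tendsto_inner_of_pairwise_orthogonal norm_toLp_le
    (fun k l hkl => (inner_toLp k (hfL l)).trans (horth hkl)) _

/-- Against `L²` functions this is Bessel's inequality; the functionals `g ↦ ∫ f k * g` are
equicontinuous on `L¹`, so the convergence passes to `L¹` by density. -/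
lemma tendsto_integral_mul_of_orthogonal
    (hf : ∀ k, AEStronglyMeasurable (f k) ν) (hC : ∀ k, ∀ᵐ x ∂ν, ‖f k x‖ ≤ C)
    (horth : Pairwise fun k l => ∫ x, f k x * f l x ∂ν = 0) {g : Ω → ℝ} (hg : Integrable g ν) :
    Tendsto (fun k => ∫ x, f k x * g x ∂ν) cofinite (𝓝 0) := by
  have hfg (k) {w : Ω → ℝ} (hw : Integrable w ν) : Integrable (fun x => f k x * w x) ν :=
    hw.bdd_mul (hf k) (hC k)
  refine Integrable.induction (fun g => Tendsto (fun k => ∫ x, f k x * g x ∂ν) cofinite (𝓝 0))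
    (fun c s hs _ => ?indicator) (fun g₁ g₂ _ hg₁ hg₂ ih₁ ih₂ => ?add) ?closed
    (fun g₁ g₂ hae _ ih => ?ae) hg
  case indicator =>
    exact tendsto_integral_mul_of_orthogonal_of_memLp_two hf hC horth
      ((memLp_const c).indicator hs)
  case add =>
    simpa only [Pi.add_apply, mul_add, integral_add (hfg _ hg₁) (hfg _ hg₂), add_zero]
      using ih₁.add ih₂
  case closed =>
    have hlip (k) : LipschitzWith C.toNNReal fun g : Ω →₁[ν] ℝ => ∫ x, f k x * g x ∂ν := by
      refine .of_dist_le_mul fun g₁ g₂ => ?_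
      have hg₁ := L1.integrable_coeFn g₁
      have hg₂ := L1.integrable_coeFn g₂
      rw [dist_eq_norm, dist_eq_norm, ← integral_sub (hfg k hg₁) (hfg k hg₂),
        L1.norm_eq_integral_norm, ← integral_const_mul]
      refine norm_integral_le_of_norm_le ((L1.integrable_coeFn (g₁ - g₂)).norm.const_mul _) ?_
      filter_upwards [hC k, Lp.coeFn_sub g₁ g₂] with x hx hsub
      rw [hsub, Pi.sub_apply, ← mul_sub, norm_mul]
      gcongr
      exact hx.trans (Real.le_coe_toNNReal C)
    exact (LipschitzWith.uniformEquicontinuous _ _ hlip).equicontinuous.isClosed_setOfPred_tendsto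
      continuous_const
  case ae =>
    refine ih.congr fun k => integral_congr_ae ?_
    filter_upwards [hae] with x hx
    rw [hx]

end

/-! ### Cylinder sets -/

section

variable {ι S : Type*} {F : Finset ι} {x y : ι → S}

/-- The cylinder of the configurations agreeing with `x` on the finite window `F`; unlike
`cylOf`, it is indexed by a point, so that membership is an equivalence relation. -/
def pointCylinder (F : Finset ι) (x : ι → S) : Set (ι → S) := {y | ∀ k ∈ F, y k = x k}

lemma mem_pointCylinder : y ∈ pointCylinder F x ↔ ∀ k ∈ F, y k = x k := Iff.rfl

lemma pointCylinder_insert_update [DecidableEq ι] {k : ι} (hk : k ∉ F) (x : ι → S) (t : S) :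
    pointCylinder (insert k F) (Function.update x k t) = pointCylinder F x ∩ {y | y k = t} := by
  ext y
  simp only [mem_pointCylinder, Finset.forall_mem_insert, Function.update_self,
    Set.mem_inter_iff, Set.mem_ofPred_eq, and_comm (a := y k = t)]
  refine and_congr_left fun _ => forall₂_congr fun l hl => ?_
  rw [Function.update_of_ne (ne_of_mem_of_not_mem hl hk)]

lemma pointCylinder_eq_preimage_restrict :
    pointCylinder F x = F.restrict (π := fun _ => S) ⁻¹' {F.restrict x} := by
  ext y
  simp [mem_pointCylinder, funext_iff]

lemma measurableSet_pointCylinder [MeasurableSpace S] [MeasurableSingletonClass S]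
    (F : Finset ι) (x : ι → S) : MeasurableSet (pointCylinder F x) := by
  rw [pointCylinder_eq_preimage_restrict]
  exact F.measurable_restrict (measurableSet_singleton _)

lemma measure_ext_of_pointCylinder [Countable S] [MeasurableSpace S] [MeasurableSingletonClass S]
    {κ : Type*} {ρ σ : Measure (ι → S)} [IsFiniteMeasure ρ] {F : κ → Finset ι}
    (hF : ∀ I : Finset ι, ∃ n, I ⊆ F n)
    (h : ∀ n x, ρ (pointCylinder (F n) x) = σ (pointCylinder (F n) x)) : ρ = σ := by
  have map_restrict_eq (n) : ρ.map (F n).restrict = σ.map (F n).restrict := by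
    refine Measure.ext_of_singleton fun w => ?_
    rw [Measure.map_apply (F n).measurable_restrict (measurableSet_singleton w),
      Measure.map_apply (F n).measurable_restrict (measurableSet_singleton w)]
    rcases ((F n).restrict (π := fun _ => S) ⁻¹' {w}).eq_empty_or_nonempty with hw | ⟨x, rfl⟩
    · rw [hw, measure_empty, measure_empty]
    · rw [← pointCylinder_eq_preimage_restrict, h]
  refine IsProjectiveLimit.unique (P := fun I => ρ.map I.restrict) (fun I => rfl) fun I => ?_
  obtain ⟨n, hn⟩ := hF I
  rw [← Finset.restrict₂_comp_restrict hn,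
    ← Measure.map_map (Finset.measurable_restrict₂ hn) (F n).measurable_restrict,
    ← map_restrict_eq, Measure.map_map (Finset.measurable_restrict₂ hn) (F n).measurable_restrict,
    Finset.restrict₂_comp_restrict hn]

lemma integral_mul_eq_zero_of_dependsOn [Finite S] [MeasurableSpace S]
    [MeasurableSingletonClass S] {ν : Measure (ι → S)} {φ f : (ι → S) → ℝ}
    (hφ : DependsOn φ F) (hi : Integrable (fun y => φ y * f y) ν)
    (hf : ∀ x, ∫ y in pointCylinder F x, f y ∂ν = 0) : ∫ y, φ y * f y ∂ν = 0 := by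
  have := Fintype.ofFinite (F → S)
  let fiber (w : F → S) : Set (ι → S) := F.restrict ⁻¹' {w}
  have iUnion_fiber : ⋃ w, fiber w = Set.univ := by
    simp only [fiber, ← Set.preimage_iUnion, Set.iUnion_of_singleton, Set.preimage_univ]
  rw [← setIntegral_univ, ← iUnion_fiber, integral_iUnion_fintype (s := fiber)
    (fun w => F.measurable_restrict (measurableSet_singleton w))
    (fun w w' hww' => Disjoint.preimage _ (Set.disjoint_singleton.2 hww'))
    fun w => hi.integrableOn]
  refine Finset.sum_eq_zero fun w _ => ?_
  rcases (fiber w).eq_empty_or_nonempty with hw | ⟨x, rfl⟩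
  · rw [hw, setIntegral_empty]
  · have fiber_eq : fiber (F.restrict x) = pointCylinder F x :=
      pointCylinder_eq_preimage_restrict.symm
    rw [fiber_eq, ← mul_zero (φ x), ← hf x, ← integral_const_mul]
    exact setIntegral_congr_fun (measurableSet_pointCylinder F x)
      fun y hy => by rw [hφ fun k hk => hy k hk]

end

lemma prod_Ico_add_natCast {M : Type*} [CommMonoid M] (a : ℤ) (m : ℕ) (f : ℤ → M) :
    ∏ k ∈ Finset.Ico a (a + m), f k = ∏ l ∈ Finset.range m, f (a + l) := by
  simp [Int.Ico_eq_finset_map]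

/-! ### Markov measures -/

section

variable {S : Type*} [MeasurableSpace S] {μ : Measure (Seq S)}

lemma measurable_shiftZ (n : ℤ) : Measurable (shiftZ (S := S) n) :=
  measurable_pi_iff.2 fun k => measurable_pi_apply (k + n)

lemma measurableSet_coord_eq {ι : Type*} [MeasurableSingletonClass S] (k : ι) (s : S) :
    MeasurableSet {y : ι → S | y k = s} :=
  (measurableSet_singleton s).preimage (measurable_pi_apply k)

lemma map_shiftZ_zero : μ.map (shiftZ 0) = μ := by
  have shiftZ_zero : shiftZ (S := S) 0 = id := by
    ext x k
    simp [shiftZ]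
  rw [shiftZ_zero, Measure.map_id]

lemma map_shiftZ_map_shiftZ (m n : ℤ) :
    (μ.map (shiftZ n)).map (shiftZ m) = μ.map (shiftZ (m + n)) := by
  rw [Measure.map_map (measurable_shiftZ m) (measurable_shiftZ n)]
  congr 1
  ext x k
  simp [shiftZ, add_assoc]

variable [Fintype S]

lemma ShiftNonsingular.absolutelyContinuous_map_shiftZ (hns : ShiftNonsingular μ) (n : ℤ) :
    μ ≪ μ.map (shiftZ n) := by
  have to_one : μ ≪ μ.map (shiftZ 1) := hns.2
  have to_neg_one : μ ≪ μ.map (shiftZ (-1)) := by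
    simpa only [shiftMap, map_shiftZ_map_shiftZ, neg_add_cancel, map_shiftZ_zero]
      using hns.1.map (measurable_shiftZ (-1))
  induction n with
  | zero => rw [map_shiftZ_zero]
  | succ n ih =>
    simpa only [map_shiftZ_map_shiftZ, add_comm (1 : ℤ)] using
      to_one.trans (ih.map (measurable_shiftZ 1))
  | pred n ih =>
    simpa only [map_shiftZ_map_shiftZ, neg_add_eq_sub] using
      to_neg_one.trans (ih.map (measurable_shiftZ (-1)))

lemma ShiftNonsingular.map_shiftZ_absolutelyContinuous (hns : ShiftNonsingular μ) (n : ℤ) :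
    μ.map (shiftZ n) ≪ μ := by
  simpa only [map_shiftZ_map_shiftZ, add_neg_cancel, map_shiftZ_zero]
    using (hns.absolutelyContinuous_map_shiftZ (-n)).map (measurable_shiftZ n)

end

namespace IsMarkovMeasure

variable {S : Type*} [Fintype S] [MeasurableSpace S] {A : S → S → Bool} {P : ℤ → S → S → ℝ}
  {π : ℤ → S → ℝ} {μ : Measure (Seq S)}

lemma measure_pointCylinder_Icc (hμ : IsMarkovMeasure μ A P π) {a b : ℤ} (hab : a ≤ b)
    (x : Seq S) : μ (pointCylinder (Finset.Icc a b) x) =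
      ENNReal.ofReal (π a (x a) * ∏ k ∈ Finset.Ico a b, P k (x k) (x (k + 1))) := by
  obtain ⟨m, rfl⟩ := Int.le.dest hab
  have pointCylinder_eq : pointCylinder (Finset.Icc a (a + m)) x =
      {y | ∀ i : Fin (m + 1), y (a + (i : ℕ)) = x (a + (i : ℕ))} := by
    ext y
    refine ⟨fun hy i => hy _ (Finset.mem_Icc.2 (by omega)), fun hy k hk => ?_⟩
    rw [Finset.mem_Icc] at hk
    simpa [Int.toNat_of_nonneg (sub_nonneg.2 hk.1)] using hy ⟨(k - a).toNat, by omega⟩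
  have hcyl := hμ.cylinder (a - 1) m fun i => x (a + (i : ℕ))
  rw [sub_add_cancel] at hcyl
  rw [pointCylinder_eq, hcyl, prod_Ico_add_natCast, Finset.prod_range]
  simp [add_assoc]

lemma dist_mul_prod_nonneg (hμ : IsMarkovMeasure μ A P π) (a b : ℤ) (x : Seq S) :
    0 ≤ π a (x a) * ∏ k ∈ Finset.Ico a b, P k (x k) (x (k + 1)) :=
  mul_nonneg (hμ.dist_nonneg _ _) (Finset.prod_nonneg fun k _ => (hμ.stochastic k).1 _ _)

lemma measureReal_pointCylinder_Icc (hμ : IsMarkovMeasure μ A P π) {a b : ℤ} (hab : a ≤ b)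
    (x : Seq S) : μ.real (pointCylinder (Finset.Icc a b) x) =
      π a (x a) * ∏ k ∈ Finset.Ico a b, P k (x k) (x (k + 1)) := by
  rw [Measure.real, hμ.measure_pointCylinder_Icc hab,
    ENNReal.toReal_ofReal (hμ.dist_mul_prod_nonneg a b x)]

lemma measureReal_pointCylinder_inter_coord_eq (hμ : IsMarkovMeasure μ A P π) {a b : ℤ}
    (hab : a ≤ b) (x : Seq S) (t : S) :
    μ.real (pointCylinder (Finset.Icc a b) x ∩ {y | y (b + 1) = t}) =
      μ.real (pointCylinder (Finset.Icc a b) x) * P b (x b) t := by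
  rw [← pointCylinder_insert_update (by simp), Finset.insert_Icc_right_eq_Icc_add_one (by omega),
    hμ.measureReal_pointCylinder_Icc (by omega), hμ.measureReal_pointCylinder_Icc hab,
    ← Finset.insert_Ico_right_eq_Ico_add_one hab, Finset.prod_insert (by simp),
    Function.update_self, Function.update_of_ne (by omega), Function.update_of_ne (by omega),
    mul_comm (P b _ _), mul_assoc]
  congr 2
  refine Finset.prod_congr rfl fun k hk => ?_
  rw [Finset.mem_Ico] at hk
  rw [Function.update_of_ne (by omega), Function.update_of_ne (by omega)]

lemma measureReal_coord_eq (hμ : IsMarkovMeasure μ A P π) (k : ℤ) (s : S) :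
    μ.real {y | y k = s} = π k s := by
  have h := hμ.measureReal_pointCylinder_Icc le_rfl (a := k) fun _ => s
  simpa [pointCylinder] using h

lemma measureReal_coord_eq_and_coord_eq (hμ : IsMarkovMeasure μ A P π) (k : ℤ) (s t : S) :
    μ.real {y | y k = s ∧ y (k + 1) = t} = π k s * P k s t := by
  have h := hμ.measureReal_pointCylinder_inter_coord_eq le_rfl (a := k) (fun _ => s) t
  rw [← hμ.measureReal_coord_eq]
  simpa [pointCylinder, Set.ofPred_and] using h

lemma map_shiftZ [MeasurableSingletonClass S] (hμ : IsMarkovMeasure μ A P π) (n : ℤ) :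
    IsMarkovMeasure (μ.map (shiftZ n)) A (fun k => P (k + n)) (fun k => π (k + n)) where
  isProb :=
    have := hμ.isProb
    Measure.isProbabilityMeasure_map (measurable_shiftZ n).aemeasurable
  stochastic k := hμ.stochastic (k + n)
  compat k := hμ.compat (k + n)
  dist_nonneg k := hμ.dist_nonneg (k + n)
  dist_sum k := hμ.dist_sum (k + n)
  consistent k t := by rw [hμ.consistent, add_right_comm]
  supp := by
    have := hμ.isProb
    have : IsProbabilityMeasure (μ.map (shiftZ n)) :=
      Measure.isProbabilityMeasure_map (measurable_shiftZ n).aemeasurable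
    have hsub : SFT A ⊆ shiftZ n ⁻¹' SFT A := fun x hx k => by
      simpa only [shiftZ, add_right_comm k 1 n] using hx (k + n)
    refine le_antisymm prob_le_one ?_
    exact hμ.supp.ge.trans ((measure_mono hsub).trans
      (Measure.le_map_apply (measurable_shiftZ n).aemeasurable _))
  cylinder k m w := by
    have hmeas : MeasurableSet {x : Seq S | ∀ i : Fin (m + 1), x (k + 1 + (i : ℕ)) = w i} := by
      simp only [Set.ofPred_forall]
      exact .iInter fun i => measurableSet_coord_eq _ _
    rw [Measure.map_apply (measurable_shiftZ n) hmeas]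
    simpa only [Set.preimage_ofPred_eq, shiftZ, add_right_comm _ _ n] using hμ.cylinder (k + n) m w

lemma dist_mul_pow_le (hμ : IsMarkovMeasure μ A P π) {δ : ℝ} (hδ : 0 ≤ δ)
    (hP : ∀ n s t, A s t = true → δ ≤ P n s t) (n : ℤ) (u : ℕ → S) (m : ℕ)
    (hu : ∀ i < m, A (u i) (u (i + 1)) = true) : π n (u 0) * δ ^ m ≤ π (n + m) (u m) := by
  induction m with
  | zero => simp
  | succ m ih =>
    calc π n (u 0) * δ ^ (m + 1) = π n (u 0) * δ ^ m * δ := by ring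
      _ ≤ π (n + m) (u m) * P (n + m) (u m) (u (m + 1)) := by
        gcongr
        · exact hμ.dist_nonneg _ _
        · exact ih fun i hi => hu i (by omega)
        · exact hP _ _ _ (hu m m.lt_succ_self)
      _ ≤ ∑ s, π (n + m) s * P (n + m) s (u (m + 1)) :=
        Finset.single_le_sum (f := fun s => π (n + m) s * P (n + m) s (u (m + 1)))
          (fun s _ => mul_nonneg (hμ.dist_nonneg _ _) ((hμ.stochastic _).1 _ _))
          (Finset.mem_univ _)
      _ = π (n + (m + 1 : ℕ)) (u (m + 1)) := by
        rw [hμ.consistent, Nat.cast_add_one, add_assoc]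

lemma exists_pos_forall_le_dist_s16 (hμ : IsMarkovMeasure μ A P π) (hA : IsPrimitive A)
    (hD : Doeblin A P) : ∃ c > 0, ∀ n s, c ≤ π n s := by
  obtain ⟨δ, hδ, hP⟩ := hD
  obtain ⟨M, -, hM⟩ := hA
  refine ⟨δ ^ M / (Fintype.card S + 1), by positivity, fun n t => ?_⟩
  have dist_mul_le (s : S) : π (n - M) s * δ ^ M ≤ π n t := by
    obtain ⟨u, rfl, rfl, hu⟩ := hM s t
    simpa using hμ.dist_mul_pow_le hδ.le (fun n s t => (hP n s t).2) (n - M) u M hu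
  rw [div_le_iff₀ (by positivity)]
  calc δ ^ M = ∑ s, π (n - M) s * δ ^ M := by rw [← Finset.sum_mul, hμ.dist_sum, one_mul]
    _ ≤ ∑ _s : S, π n t := Finset.sum_le_sum fun s _ => dist_mul_le s
    _ = π n t * Fintype.card S := by simp [mul_comm]
    _ ≤ π n t * (Fintype.card S + 1) := by
      gcongr
      · exact hμ.dist_nonneg n t
      · exact le_add_of_nonneg_right zero_le_one

end IsMarkovMeasure

/-! ### Asymptotic constancy of the transition matrices -/

section

variable {S : Type*} {P : ℤ → S → S → ℝ} {s t : S} {k : ℤ}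

lemma IsStochastic.le_one [Fintype S] {p : S → S → ℝ} (hp : IsStochastic p) (s t : S) :
    p s t ≤ 1 :=
  hp.2 s ▸ Finset.single_le_sum (fun u _ => hp.1 s u) (Finset.mem_univ t)

/-- The martingale difference `1[y k = s] * (1[y (k + 1) = t] - P k s t)`; its mean under a Markov
measure measures how far the transition probability from `s` to `t` at time `k` is from that of
`P`. -/
noncomputable def martingaleDiff (P : ℤ → S → S → ℝ) (s t : S) (k : ℤ) (y : Seq S) : ℝ :=
  {y : Seq S | y k = s ∧ y (k + 1) = t}.indicator 1 y -
    P k s t * {y : Seq S | y k = s}.indicator 1 y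

lemma norm_martingaleDiff_le_one (h₀ : 0 ≤ P k s t) (h₁ : P k s t ≤ 1) (y : Seq S) :
    ‖martingaleDiff P s t k y‖ ≤ 1 := by
  have value : martingaleDiff P s t k y = 1 - P k s t ∨ martingaleDiff P s t k y = -P k s t ∨
      martingaleDiff P s t k y = 0 := by
    by_cases hs : y k = s <;> by_cases ht : y (k + 1) = t <;> simp [martingaleDiff, hs, ht]
  rw [Real.norm_eq_abs, abs_le]
  rcases value with h | h | h <;> rw [h] <;> constructor <;> linarith

lemma martingaleDiff_of_ne {y : Seq S} (hy : y k ≠ s) : martingaleDiff P s t k y = 0 := by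
  simp [martingaleDiff, hy]

lemma dependsOn_martingaleDiff (P : ℤ → S → S → ℝ) (s t : S) {l : ℤ} (hkl : k < l) :
    DependsOn (martingaleDiff P s t k) (Finset.Icc k l) := by
  intro x y hxy
  have hk : x k = y k := hxy k (by simp [hkl.le])
  have hk1 : x (k + 1) = y (k + 1) := hxy (k + 1) (by simpa using hkl)
  by_cases hs : y k = s <;> by_cases ht : y (k + 1) = t <;> simp [martingaleDiff, hk, hk1, hs, ht]

variable [MeasurableSpace S] [MeasurableSingletonClass S]

lemma measurableSet_coord_eq_and_coord_eq (k : ℤ) (s t : S) :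
    MeasurableSet {y : Seq S | y k = s ∧ y (k + 1) = t} :=
  (measurableSet_coord_eq k s).inter (measurableSet_coord_eq (k + 1) t)

lemma measurable_martingaleDiff (P : ℤ → S → S → ℝ) (s t : S) (k : ℤ) :
    Measurable (martingaleDiff P s t k) :=
  (measurable_one.indicator (measurableSet_coord_eq_and_coord_eq k s t)).sub
    ((measurable_one.indicator (measurableSet_coord_eq k s)).const_mul _)

lemma integral_martingaleDiff (ν : Measure (Seq S)) [IsFiniteMeasure ν] :
    ∫ y, martingaleDiff P s t k y ∂ν =
      ν.real {y | y k = s ∧ y (k + 1) = t} - P k s t * ν.real {y | y k = s} := by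
  have hst := measurableSet_coord_eq_and_coord_eq k s t
  have hs := measurableSet_coord_eq (ι := ℤ) k s
  have integrable_one : Integrable (1 : Seq S → ℝ) ν := integrable_const 1
  simp only [martingaleDiff]
  rw [integral_sub (integrable_one.indicator hst) ((integrable_one.indicator hs).const_mul _),
    integral_const_mul, integral_indicator_one hst, integral_indicator_one hs]

end

namespace IsMarkovMeasure

variable {S : Type*} [Fintype S] [MeasurableSpace S] [MeasurableSingletonClass S]
  {A A' : S → S → Bool} {P Q : ℤ → S → S → ℝ} {π ρ : ℤ → S → ℝ} {μ ν : Measure (Seq S)}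

lemma setIntegral_martingaleDiff_eq_zero (hμ : IsMarkovMeasure μ A P π) (s t : S) {a b : ℤ}
    (hab : a ≤ b) (x : Seq S) :
    ∫ y in pointCylinder (Finset.Icc a b) x, martingaleDiff P s t b y ∂μ = 0 := by
  have := hμ.isProb
  have hb : b ∈ Finset.Icc a b := Finset.right_mem_Icc.2 hab
  by_cases hx : x b = s
  · have inter_past : {y | y b = s} ∩ pointCylinder (Finset.Icc a b) x =
        pointCylinder (Finset.Icc a b) x :=
      Set.inter_eq_right.2 fun y hy => (hy b hb).trans hx
    rw [integral_martingaleDiff,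
      measureReal_restrict_apply (measurableSet_coord_eq_and_coord_eq b s t),
      measureReal_restrict_apply (measurableSet_coord_eq b s), Set.ofPred_and,
      Set.inter_right_comm, inter_past, hμ.measureReal_pointCylinder_inter_coord_eq hab, hx,
      mul_comm, sub_self]
  · refine setIntegral_eq_zero_of_forall_eq_zero fun y hy => martingaleDiff_of_ne ?_
    rwa [hy b hb]

lemma integral_martingaleDiff_mul_eq_zero (hμ : IsMarkovMeasure μ A P π) (s t : S) :
    Pairwise fun k l => ∫ y, martingaleDiff P s t k y * martingaleDiff P s t l y ∂μ = 0 := by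
  have := hμ.isProb
  have norm_le_one (k : ℤ) (y : Seq S) : ‖martingaleDiff P s t k y‖ ≤ 1 :=
    norm_martingaleDiff_le_one ((hμ.stochastic k).1 s t) ((hμ.stochastic k).le_one s t) y
  intro k l hkl
  wlog hlt : k < l generalizing k l
  · simpa only [mul_comm] using this hkl.symm (by omega)
  refine integral_mul_eq_zero_of_dependsOn (dependsOn_martingaleDiff P s t hlt) ?_
    (hμ.setIntegral_martingaleDiff_eq_zero s t hlt.le)
  exact (Integrable.of_bound (measurable_martingaleDiff P s t l).aestronglyMeasurable 1
    (ae_of_all _ (norm_le_one l))).bdd_mul (measurable_martingaleDiff P s t k).aestronglyMeasurable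
    (ae_of_all _ (norm_le_one k))

/-- The density `dν/dμ` is tested against the martingale differences of `μ`. -/
lemma tendsto_transition_sub (hμ : IsMarkovMeasure μ A P π) (hν : IsMarkovMeasure ν A' Q ρ)
    (hνμ : ν ≪ μ) {c : ℝ} (hc : 0 < c) {s : S} (hρ : ∀ k, c ≤ ρ k s) (t : S) :
    Tendsto (fun k => Q k s t - P k s t) cofinite (𝓝 0) := by
  have := hμ.isProb
  have := hν.isProb
  have integral_density (k : ℤ) :
      ∫ y, martingaleDiff P s t k y * (ν.rnDeriv μ y).toReal ∂μ =
        ρ k s * (Q k s t - P k s t) := by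
    calc ∫ y, martingaleDiff P s t k y * (ν.rnDeriv μ y).toReal ∂μ
        = ∫ y, martingaleDiff P s t k y ∂ν := by
          simpa only [smul_eq_mul, mul_comm] using
            integral_rnDeriv_smul hνμ (f := martingaleDiff P s t k)
      _ = ρ k s * (Q k s t - P k s t) := by
          rw [integral_martingaleDiff, hν.measureReal_coord_eq_and_coord_eq,
            hν.measureReal_coord_eq]
          ring
  have tendsto_mul : Tendsto (fun k => ρ k s * (Q k s t - P k s t)) cofinite (𝓝 0) := by
    simp only [← integral_density]
    exact tendsto_integral_mul_of_orthogonal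
      (fun k => (measurable_martingaleDiff P s t k).aestronglyMeasurable)
      (fun k => ae_of_all _ <| norm_martingaleDiff_le_one ((hμ.stochastic k).1 s t)
        ((hμ.stochastic k).le_one s t))
      (hμ.integral_martingaleDiff_mul_eq_zero s t) Measure.integrable_toReal_rnDeriv
  refine squeeze_zero_norm (a := fun k => c⁻¹ * ‖ρ k s * (Q k s t - P k s t)‖) (fun k => ?_)
    (by simpa using tendsto_mul.norm.const_mul c⁻¹)
  rw [norm_mul, Real.norm_of_nonneg (hν.dist_nonneg k s), le_inv_mul_iff₀ hc]
  gcongr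
  exact hρ k

lemma tendsto_transition_div (hμ : IsMarkovMeasure μ A P π) (hD : Doeblin A P)
    (hns : ShiftNonsingular μ) {c : ℝ} (hc : 0 < c) {s t : S} (hπ : ∀ k, c ≤ π k s)
    (hst : A s t = true) (a b : ℤ) :
    Tendsto (fun n => P (a - n) s t / P (b - n) s t) cofinite (𝓝 1) := by
  obtain ⟨δ, hδ, hP⟩ := hD
  have le_P (k : ℤ) : δ ≤ P k s t := (hP k s t).2 hst
  have tendsto_sub : Tendsto (fun n => P (a - n) s t - P (b - n) s t) cofinite (𝓝 0) := by
    have tendsto_shift_sub := hμ.tendsto_transition_sub (hμ.map_shiftZ (a - b))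
      (hns.map_shiftZ_absolutelyContinuous _) hc (fun k => hπ (k + (a - b))) t
    have hinj : Function.Injective fun n : ℤ => b - n := sub_right_injective
    refine (tendsto_shift_sub.comp hinj.tendsto_cofinite).congr fun n => ?_
    have hshift : b - n + (a - b) = a - n := by ring
    rw [Function.comp_apply, hshift]
  rw [← tendsto_sub_nhds_zero_iff]
  refine squeeze_zero_norm (a := fun n => δ⁻¹ * ‖P (a - n) s t - P (b - n) s t‖) (fun n => ?_)
    (by simpa using tendsto_sub.norm.const_mul δ⁻¹)
  have P_pos : 0 < P (b - n) s t := hδ.trans_le (le_P _)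
  rw [div_sub_one P_pos.ne', norm_div, Real.norm_of_nonneg P_pos.le, div_eq_inv_mul]
  gcongr
  exact le_P _

end IsMarkovMeasure

/-! ### Block exchanges -/

section

variable {S : Type*} {B B' : ℕ → S} {L : ℕ} {i j k : ℤ} {x y : Seq S} {F : Finset ℤ}

/-- Overwrite the coordinates `i, …, i + L - 1` of `x` with the block `B`; a block exchange is the
composition of two such replacements. -/
def replaceBlock (B : ℕ → S) (L : ℕ) (i : ℤ) (x : Seq S) : Seq S :=
  fun k => if i ≤ k ∧ k < i + L then B (k - i).toNat else x k

lemma swapBlocks_eq_replaceBlock_replaceBlock (B B' : ℕ → S) (L : ℕ) (i j : ℤ) (x : Seq S) :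
    swapBlocks B B' L i j x = replaceBlock B' L i (replaceBlock B L j x) := rfl

lemma replaceBlock_apply_of_notMem (hk : k ∉ Set.Ico i (i + L)) (B : ℕ → S) (x : Seq S) :
    replaceBlock B L i x k = x k :=
  if_neg hk

lemma mem_cylOf_iff_replaceBlock_eq_self : x ∈ cylOf B L i ↔ replaceBlock B L i x = x := by
  refine ⟨fun hx => funext fun k => ?_, fun hx l hl => ?_⟩
  · by_cases hk : k ∈ Set.Ico i (i + L)
    · have hx_k := hx (k - i).toNat (by have := hk.1; have := hk.2; omega)
      rw [Int.toNat_of_nonneg (sub_nonneg.2 hk.1), add_sub_cancel] at hx_k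
      rw [replaceBlock, if_pos (Set.mem_Ico.1 hk), hx_k]
    · exact replaceBlock_apply_of_notMem hk B x
  · rw [← hx, replaceBlock, if_pos (by omega), add_sub_cancel_left, Int.toNat_natCast]

lemma replaceBlock_eq_self (hx : x ∈ cylOf B L i) : replaceBlock B L i x = x :=
  mem_cylOf_iff_replaceBlock_eq_self.1 hx

lemma replaceBlock_replaceBlock (B B' : ℕ → S) (L : ℕ) (i : ℤ) (x : Seq S) :
    replaceBlock B L i (replaceBlock B' L i x) = replaceBlock B L i x := by
  ext k
  simp only [replaceBlock]
  split_ifs <;> rfl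

lemma replaceBlock_comm (hij : (L : ℤ) ≤ |i - j|) (B B' : ℕ → S) (x : Seq S) :
    replaceBlock B L i (replaceBlock B' L j x) = replaceBlock B' L j (replaceBlock B L i x) := by
  ext k
  simp only [replaceBlock]
  split_ifs
  · rcases le_abs.1 hij with h | h <;> omega
  all_goals rfl

lemma replaceBlock_mem_cylOf (B : ℕ → S) (L : ℕ) (i : ℤ) (x : Seq S) :
    replaceBlock B L i x ∈ cylOf B L i :=
  mem_cylOf_iff_replaceBlock_eq_self.2 (replaceBlock_replaceBlock B B L i x)

lemma replaceBlock_mem_cylOf_of_mem (hij : (L : ℤ) ≤ |i - j|) (hx : x ∈ cylOf B L i) :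
    replaceBlock B' L j x ∈ cylOf B L i := by
  rw [mem_cylOf_iff_replaceBlock_eq_self, replaceBlock_comm hij, replaceBlock_eq_self hx]

lemma replaceBlock_apply_of_notMem_Ioo (hfirst : B 0 = B' 0) (hlast : B (L - 1) = B' (L - 1))
    (hx : x ∈ cylOf B L i) (hk : k ∉ Set.Ioo i (i + (L - 1 : ℕ))) :
    replaceBlock B' L i x k = x k := by
  by_cases hkL : k ∈ Set.Ico i (i + L)
  · have hx' := replaceBlock_mem_cylOf B' L i x
    simp only [Set.mem_Ioo, Set.mem_Ico] at hk hkL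
    obtain rfl | rfl : k = i + (0 : ℕ) ∨ k = i + (L - 1 : ℕ) := by omega
    · rw [hx' 0 (by omega), hx 0 (by omega), hfirst]
    · rw [hx' _ (by omega), hx _ (by omega), hlast]
  · exact replaceBlock_apply_of_notMem hkL B' x

/-- The domain `B(i) ∩ B'(j)` of the asymmetric permutation `V : B(i) ⇌ B'(j)`. -/
def swapDomain (B B' : ℕ → S) (L : ℕ) (i j : ℤ) : Set (Seq S) := cylOf B L i ∩ cylOf B' L j

lemma swapBlocks_mem_swapDomain (hij : (L : ℤ) ≤ |i - j|) (B B' : ℕ → S) (x : Seq S) :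
    swapBlocks B B' L i j x ∈ swapDomain B' B L i j := by
  refine ⟨replaceBlock_mem_cylOf B' L i _, ?_⟩
  rw [swapBlocks_eq_replaceBlock_replaceBlock, replaceBlock_comm hij]
  exact replaceBlock_mem_cylOf B L j _

lemma swapBlocks_swapBlocks (hij : (L : ℤ) ≤ |i - j|) (hx : x ∈ swapDomain B B' L i j) :
    swapBlocks B' B L i j (swapBlocks B B' L i j x) = x := by
  simp only [swapBlocks_eq_replaceBlock_replaceBlock]
  rw [← replaceBlock_comm hij B' B', replaceBlock_replaceBlock, replaceBlock_replaceBlock,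
    replaceBlock_eq_self hx.2, replaceBlock_eq_self hx.1]

lemma swapBlocks_eq_self (hx : x ∈ swapDomain B' B L i j) : swapBlocks B B' L i j x = x := by
  rw [swapBlocks_eq_replaceBlock_replaceBlock, replaceBlock_eq_self hx.2,
    replaceBlock_eq_self hx.1]

lemma symSwap_of_mem (hx : x ∈ swapDomain B B' L i j) :
    symSwap B B' L i j x = swapBlocks B B' L i j x :=
  if_pos hx

lemma symSwap_comm (B B' : ℕ → S) (L : ℕ) (i j : ℤ) :
    symSwap B B' L i j = symSwap B' B L i j := by
  ext1 x
  by_cases h : x ∈ swapDomain B B' L i j <;> by_cases h' : x ∈ swapDomain B' B L i j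
  · rw [symSwap_of_mem h, symSwap_of_mem h', swapBlocks_eq_self h, swapBlocks_eq_self h']
  all_goals
    rw [swapDomain] at h h'
    simp only [symSwap, h, h', if_true, if_false]

lemma symSwap_symSwap (hij : (L : ℤ) ≤ |i - j|) (x : Seq S) :
    symSwap B B' L i j (symSwap B B' L i j x) = x := by
  by_cases h : x ∈ swapDomain B B' L i j
  · rw [symSwap_of_mem h, symSwap_comm, symSwap_of_mem (swapBlocks_mem_swapDomain hij B B' x),
      swapBlocks_swapBlocks hij h]
  by_cases h' : x ∈ swapDomain B' B L i j
  · rw [symSwap_comm, symSwap_of_mem h', symSwap_comm,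
      symSwap_of_mem (swapBlocks_mem_swapDomain hij B' B x), swapBlocks_swapBlocks hij h']
  · rw [swapDomain] at h h'
    simp only [symSwap, h, h', if_false]

lemma mem_swapDomain_of_mem_pointCylinder (hiF : Finset.Ico i (i + L) ⊆ F)
    (hjF : Finset.Ico j (j + L) ⊆ F) (hy : y ∈ pointCylinder F x)
    (hx : x ∈ swapDomain B B' L i j) : y ∈ swapDomain B B' L i j :=
  ⟨fun l hl => (hy _ (hiF (by simp [hl]))).trans (hx.1 l hl),
    fun l hl => (hy _ (hjF (by simp [hl]))).trans (hx.2 l hl)⟩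

lemma swapBlocks_mem_pointCylinder (B B' : ℕ → S) (L : ℕ) (i j : ℤ) (hy : y ∈ pointCylinder F x) :
    swapBlocks B B' L i j y ∈ pointCylinder F (swapBlocks B B' L i j x) := by
  intro k hk
  simp only [swapBlocks, hy k hk]

lemma preimage_symSwap_pointCylinder (hij : (L : ℤ) ≤ |i - j|) (hiF : Finset.Ico i (i + L) ⊆ F)
    (hjF : Finset.Ico j (j + L) ⊆ F) (hx : x ∈ swapDomain B B' L i j) :
    symSwap B B' L i j ⁻¹' pointCylinder F x = pointCylinder F (swapBlocks B B' L i j x) := by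
  ext y
  constructor
  · intro hy
    have hmem := mem_swapDomain_of_mem_pointCylinder hiF hjF hy hx
    rw [← symSwap_symSwap hij y, symSwap_of_mem hmem]
    exact swapBlocks_mem_pointCylinder B B' L i j hy
  · intro hy
    have hmem := mem_swapDomain_of_mem_pointCylinder hiF hjF hy
      (swapBlocks_mem_swapDomain hij B B' x)
    rw [Set.mem_preimage, symSwap_comm, symSwap_of_mem hmem, ← swapBlocks_swapBlocks hij hx]
    exact swapBlocks_mem_pointCylinder B' B L i j hy

variable [MeasurableSpace S]

lemma measurable_replaceBlock (B : ℕ → S) (L : ℕ) (i : ℤ) : Measurable (replaceBlock B L i) := by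
  refine measurable_pi_iff.2 fun k => ?_
  by_cases hk : i ≤ k ∧ k < i + L
  · simp only [replaceBlock, hk, and_self, if_true, measurable_const]
  · simp only [replaceBlock, hk, if_false, measurable_pi_apply]

variable [MeasurableSingletonClass S]

lemma measurableSet_swapDomain (B B' : ℕ → S) (L : ℕ) (i j : ℤ) :
    MeasurableSet (swapDomain B B' L i j) := by
  have measurableSet_cylOf (B : ℕ → S) (i : ℤ) : MeasurableSet (cylOf B L i) := by
    simp only [cylOf, Set.ofPred_forall]
    exact .iInter fun l => .iInter fun _ => measurableSet_coord_eq _ _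
  exact (measurableSet_cylOf B i).inter (measurableSet_cylOf B' j)

lemma measurable_symSwap (B B' : ℕ → S) (L : ℕ) (i j : ℤ) : Measurable (symSwap B B' L i j) := by
  have measurable_swapBlocks (B B' : ℕ → S) : Measurable (swapBlocks B B' L i j) :=
    (measurable_replaceBlock B' L i).comp (measurable_replaceBlock B L j)
  exact (measurable_swapBlocks B B').ite (measurableSet_swapDomain B B' L i j)
    ((measurable_swapBlocks B' B).ite (measurableSet_swapDomain B' B L i j) measurable_id)

end

/-! ### The distortion of a block exchange -/

/-- `B` and `B'` are `A`-admissible words of length `L` with the same first and the same last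
symbol. Unlike in the definition of an admissible pair, they may coincide. -/
structure IsAdmissiblePair {S : Type*} (A : S → S → Bool) (B B' : ℕ → S) (L : ℕ) : Prop where
  admissible_left : ∀ l : ℕ, l + 1 < L → A (B l) (B (l + 1)) = true
  admissible_right : ∀ l : ℕ, l + 1 < L → A (B' l) (B' (l + 1)) = true
  first_eq : B 0 = B' 0
  last_eq : B (L - 1) = B' (L - 1)

lemma IsAdmissiblePair.symm {S : Type*} {A : S → S → Bool} {B B' : ℕ → S} {L : ℕ}
    (h : IsAdmissiblePair A B B' L) : IsAdmissiblePair A B' B L where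
  admissible_left := h.admissible_right
  admissible_right := h.admissible_left
  first_eq := h.first_eq.symm
  last_eq := h.last_eq.symm

section

variable {S : Type*} {A : S → S → Bool} {P : ℤ → S → S → ℝ} {B B' : ℕ → S} {L : ℕ} {i j : ℤ}
  {x : Seq S} {I : Finset ℤ}

/-- The product of the transition probabilities along the block `B` placed at the coordinates
`i, …, i + L - 1`. -/
def blockWeight (P : ℤ → S → S → ℝ) (B : ℕ → S) (L : ℕ) (i : ℤ) : ℝ :=
  ∏ l ∈ Finset.range (L - 1), P (i + l) (B l) (B (l + 1))

/-- The factor by which `V : B(i) ⇌ B'(j)` distorts a Markov measure with transition matrices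
`P`. -/
noncomputable def distortion (P : ℤ → S → S → ℝ) (B B' : ℕ → S) (L : ℕ) (i j : ℤ) : ℝ :=
  blockWeight P B' L i / blockWeight P B' L j * (blockWeight P B L j / blockWeight P B L i)

lemma Doeblin.pos (hD : Doeblin A P) {s t : S} (hst : A s t = true) (n : ℤ) : 0 < P n s t :=
  let ⟨_, hδ, hP⟩ := hD
  hδ.trans_le ((hP n s t).2 hst)

lemma Doeblin.blockWeight_pos (hD : Doeblin A P)
    (hB : ∀ l : ℕ, l + 1 < L → A (B l) (B (l + 1)) = true) (i : ℤ) : 0 < blockWeight P B L i :=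
  Finset.prod_pos fun l hl => hD.pos (hB l (by rw [Finset.mem_range] at hl; omega)) _

lemma Doeblin.distortion_pos (hD : Doeblin A P) (hB : IsAdmissiblePair A B B' L) (i j : ℤ) :
    0 < distortion P B B' L i j :=
  mul_pos (div_pos (hD.blockWeight_pos hB.admissible_right i)
    (hD.blockWeight_pos hB.admissible_right j)) (div_pos (hD.blockWeight_pos hB.admissible_left j)
    (hD.blockWeight_pos hB.admissible_left i))

lemma prod_transition_eq_blockWeight (P : ℤ → S → S → ℝ) (hx : x ∈ cylOf B L i) :
    ∏ k ∈ Finset.Ico i (i + (L - 1 : ℕ)), P k (x k) (x (k + 1)) = blockWeight P B L i := by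
  rw [prod_Ico_add_natCast]
  refine Finset.prod_congr rfl fun l hl => ?_
  rw [Finset.mem_range] at hl
  rw [add_assoc, ← Nat.cast_add_one, hx l (by omega), hx (l + 1) (by omega)]

lemma prod_transition_replaceBlock_mul_blockWeight (P : ℤ → S → S → ℝ) (hfirst : B 0 = B' 0)
    (hlast : B (L - 1) = B' (L - 1)) (hI : Finset.Ico i (i + (L - 1 : ℕ)) ⊆ I)
    (hx : x ∈ cylOf B L i) :
    (∏ k ∈ I, P k (replaceBlock B' L i x k) (replaceBlock B' L i x (k + 1))) *
        blockWeight P B L i =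
      (∏ k ∈ I, P k (x k) (x (k + 1))) * blockWeight P B' L i := by
  have prod_off_block :
      ∏ k ∈ I \ Finset.Ico i (i + (L - 1 : ℕ)),
          P k (replaceBlock B' L i x k) (replaceBlock B' L i x (k + 1)) =
        ∏ k ∈ I \ Finset.Ico i (i + (L - 1 : ℕ)), P k (x k) (x (k + 1)) := by
    refine Finset.prod_congr rfl fun k hk => ?_
    simp only [Finset.mem_sdiff, Finset.mem_Ico] at hk
    rw [replaceBlock_apply_of_notMem_Ioo hfirst hlast hx (by rw [Set.mem_Ioo]; omega),
      replaceBlock_apply_of_notMem_Ioo hfirst hlast hx (by rw [Set.mem_Ioo]; omega)]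
  rw [← Finset.prod_sdiff hI, ← Finset.prod_sdiff hI, prod_off_block,
    prod_transition_eq_blockWeight P hx,
    prod_transition_eq_blockWeight P (replaceBlock_mem_cylOf B' L i x), mul_right_comm]

lemma prod_transition_swapBlocks (hD : Doeblin A P) (hB : IsAdmissiblePair A B B' L)
    (hij : (L : ℤ) ≤ |i - j|) (hiI : Finset.Ico i (i + (L - 1 : ℕ)) ⊆ I)
    (hjI : Finset.Ico j (j + (L - 1 : ℕ)) ⊆ I) (hx : x ∈ swapDomain B B' L i j) :
    ∏ k ∈ I, P k (swapBlocks B B' L i j x k) (swapBlocks B B' L i j x (k + 1)) =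
      distortion P B B' L i j * ∏ k ∈ I, P k (x k) (x (k + 1)) := by
  have at_i := prod_transition_replaceBlock_mul_blockWeight P hB.first_eq hB.last_eq hiI
    (replaceBlock_mem_cylOf_of_mem (B' := B) hij hx.1)
  have at_j := prod_transition_replaceBlock_mul_blockWeight P hB.symm.first_eq hB.symm.last_eq hjI
    hx.2
  have hi := (hD.blockWeight_pos hB.admissible_left i).ne'
  have hj := (hD.blockWeight_pos hB.admissible_right j).ne'
  rw [swapBlocks_eq_replaceBlock_replaceBlock, eq_div_of_mul_eq hi at_i, eq_div_of_mul_eq hj at_j,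
    distortion]
  ring

variable [Fintype S] [MeasurableSpace S] {π : ℤ → S → ℝ} {μ : Measure (Seq S)}

lemma IsMarkovMeasure.measure_preimage_symSwap_pointCylinder (hμ : IsMarkovMeasure μ A P π)
    (hD : Doeblin A P) (hB : IsAdmissiblePair A B B' L) (hij : (L : ℤ) ≤ |i - j|) {a b : ℤ}
    (hai : a < i) (hib : i + L ≤ b) (haj : a < j) (hjb : j + L ≤ b)
    (hx : x ∈ swapDomain B B' L i j) :
    μ (symSwap B B' L i j ⁻¹' pointCylinder (Finset.Icc a b) x) =
      ENNReal.ofReal (distortion P B B' L i j) * μ (pointCylinder (Finset.Icc a b) x) := by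
  have swapBlocks_left_end : swapBlocks B B' L i j x a = x a := by
    rw [swapBlocks, if_neg (by omega), if_neg (by omega)]
  rw [preimage_symSwap_pointCylinder hij
      (Finset.Ico_subset_Icc_self.trans (Finset.Icc_subset_Icc hai.le hib))
      (Finset.Ico_subset_Icc_self.trans (Finset.Icc_subset_Icc haj.le hjb)) hx,
    hμ.measure_pointCylinder_Icc (by omega), hμ.measure_pointCylinder_Icc (by omega),
    swapBlocks_left_end, prod_transition_swapBlocks hD hB hij
      (Finset.Ico_subset_Ico hai.le (by omega)) (Finset.Ico_subset_Ico haj.le (by omega)) hx,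
    mul_left_comm, ENNReal.ofReal_mul (hD.distortion_pos hB i j).le]

variable [MeasurableSingletonClass S]

lemma IsMarkovMeasure.restrict_map_symSwap (hμ : IsMarkovMeasure μ A P π) (hD : Doeblin A P)
    (hB : IsAdmissiblePair A B B' L) (hij : (L : ℤ) ≤ |i - j|) :
    (μ.map (symSwap B B' L i j)).restrict (swapDomain B B' L i j) =
      ENNReal.ofReal (distortion P B B' L i j) • μ.restrict (swapDomain B B' L i j) := by
  have := hμ.isProb
  obtain ⟨N, hN⟩ : ∃ N : ℤ, N = |i| + |j| + L + 1 := ⟨_, rfl⟩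
  have hi := abs_le.1 (le_refl |i|)
  have hj := abs_le.1 (le_refl |j|)
  have exists_window (I : Finset ℤ) : ∃ n : ℕ, I ⊆ Finset.Icc (-(N + n)) (N + n) := by
    refine ⟨I.sup Int.natAbs, fun k hk => ?_⟩
    have := Finset.le_sup (f := Int.natAbs) hk
    rw [Finset.mem_Icc]
    omega
  refine measure_ext_of_pointCylinder exists_window fun n x => ?_
  have mem_swapDomain {y z : Seq S} (hy : y ∈ pointCylinder (Finset.Icc (-(N + n)) (N + n)) z) :
      z ∈ swapDomain B B' L i j → y ∈ swapDomain B B' L i j :=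
    mem_swapDomain_of_mem_pointCylinder
      (Finset.Ico_subset_Icc_self.trans (Finset.Icc_subset_Icc (by omega) (by omega)))
      (Finset.Ico_subset_Icc_self.trans (Finset.Icc_subset_Icc (by omega) (by omega))) hy
  rw [Measure.restrict_apply (measurableSet_pointCylinder _ x), Measure.smul_apply,
    Measure.restrict_apply (measurableSet_pointCylinder _ x), smul_eq_mul]
  by_cases hx : x ∈ swapDomain B B' L i j
  · rw [Set.inter_eq_left.2 fun y hy => mem_swapDomain hy hx,
      Measure.map_apply (measurable_symSwap B B' L i j) (measurableSet_pointCylinder _ x)]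
    exact hμ.measure_preimage_symSwap_pointCylinder hD hB hij (by omega) (by omega) (by omega)
      (by omega) hx
  · rw [(Set.disjoint_left.2 fun y hy hy' =>
        hx (mem_swapDomain (fun k hk => (hy k hk).symm) hy')).inter_eq,
      measure_empty, measure_empty, mul_zero]

lemma IsMarkovMeasure.tendsto_distortion (hμ : IsMarkovMeasure μ A P π) (hD : Doeblin A P)
    (hns : ShiftNonsingular μ) {c : ℝ} (hc : 0 < c) (hπ : ∀ k s, c ≤ π k s)
    (hB : IsAdmissiblePair A B B' L) (i j : ℤ) :
    Tendsto (fun n => distortion (fun k => P (k + -n)) B B' L i j) cofinite (𝓝 1) := by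
  have tendsto_blockWeight_div {B : ℕ → S} (h : ∀ l : ℕ, l + 1 < L → A (B l) (B (l + 1)) = true)
      (i j : ℤ) : Tendsto (fun n => blockWeight (fun k => P (k + -n)) B L i /
        blockWeight (fun k => P (k + -n)) B L j) cofinite (𝓝 1) := by
    simp only [blockWeight, ← Finset.prod_div_distrib, ← sub_eq_add_neg]
    rw [← Finset.prod_const_one (M := ℝ) (s := Finset.range (L - 1))]
    refine tendsto_finsetProd _ fun l hl => ?_
    rw [Finset.mem_range] at hl
    exact hμ.tendsto_transition_div hD hns hc (fun k => hπ k _) (h l (by omega)) _ _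
  simpa only [distortion, mul_one] using (tendsto_blockWeight_div hB.admissible_right i j).mul
    (tendsto_blockWeight_div hB.admissible_left j i)

end

/-! ### The renormalization property -/

lemma ae_rnDeriv_div_rnDeriv_eq {α : Type*} [MeasurableSpace α] {μ ν ρ : Measure α}
    [SigmaFinite μ] [SigmaFinite ν] [SFinite ρ] {s : Set α} {c : ENNReal} (hμν : μ ≪ ν)
    (hs : MeasurableSet s) (hc : c ≠ ⊤) (h : ρ.restrict s = c • ν.restrict s) :
    ∀ᵐ x ∂μ, x ∈ s → ρ.rnDeriv μ x / ν.rnDeriv μ x = c := by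
  have rnDeriv_smul := Measure.rnDeriv_smul_left_of_ne_top' (ν.restrict s) μ hc
  rw [← h] at rnDeriv_smul
  filter_upwards [ρ.rnDeriv_restrict μ hs, ν.rnDeriv_restrict μ hs, rnDeriv_smul,
    Measure.rnDeriv_pos' hμν, ν.rnDeriv_lt_top μ] with x hρ hν hsmul hpos hlt hx
  rw [Set.indicator_of_mem hx] at hρ hν
  rw [← hρ, hsmul, Pi.smul_apply, hν, smul_eq_mul, mul_div_assoc,
    ENNReal.div_self hpos.ne' hlt.ne, mul_one]

section

variable {S : Type*} [Fintype S] [MeasurableSpace S] [MeasurableSingletonClass S]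
  {A : S → S → Bool} {P : ℤ → S → S → ℝ} {π : ℤ → S → ℝ} {μ : Measure (Seq S)}
  {B B' : ℕ → S} {L : ℕ} {i j : ℤ} {c : ℝ}

lemma IsMarkovMeasure.ae_rnDeriv_map_symSwap_div (hμ : IsMarkovMeasure μ A P π)
    (hD : Doeblin A P) (hns : ShiftNonsingular μ) (hB : IsAdmissiblePair A B B' L)
    (hij : (L : ℤ) ≤ |i - j|) (n : ℤ) :
    ∀ᵐ x ∂μ, x ∈ swapDomain B B' L i j →
      (μ.map fun y => symSwap B B' L i j (shiftZ n y)).rnDeriv μ x /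
          (μ.map (shiftZ n)).rnDeriv μ x =
        ENNReal.ofReal (distortion (fun k => P (k + n)) B B' L i j) := by
  have hμn := hμ.map_shiftZ n
  have := hμ.isProb
  have := hμn.isProb
  have hDn : Doeblin A fun k => P (k + n) :=
    let ⟨δ, hδ, hP⟩ := hD
    ⟨δ, hδ, fun k => hP (k + n)⟩
  have map_comp : (μ.map fun y => symSwap B B' L i j (shiftZ n y)) =
      (μ.map (shiftZ n)).map (symSwap B B' L i j) :=
    (Measure.map_map (measurable_symSwap B B' L i j) (measurable_shiftZ n)).symm
  rw [map_comp]
  exact ae_rnDeriv_div_rnDeriv_eq (hns.absolutelyContinuous_map_shiftZ n)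
    (measurableSet_swapDomain B B' L i j) ENNReal.ofReal_ne_top
    (hμn.restrict_map_symSwap hDn hB hij)

lemma IsMarkovMeasure.ae_tendsto_rnDeriv_map_symSwap_div (hμ : IsMarkovMeasure μ A P π)
    (hD : Doeblin A P) (hns : ShiftNonsingular μ) (hc : 0 < c) (hπ : ∀ n s, c ≤ π n s)
    (hB : IsAdmissiblePair A B B' L) (hij : (L : ℤ) ≤ |i - j|) :
    ∀ᵐ x ∂μ, x ∈ swapDomain B B' L i j →
      Tendsto (fun n : ℤ => (μ.map fun y => symSwap B B' L i j (shiftZ (-n) y)).rnDeriv μ x /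
          (μ.map (shiftZ (-n))).rnDeriv μ x) cofinite (𝓝 1) := by
  filter_upwards [ae_all_iff.2 fun n => hμ.ae_rnDeriv_map_symSwap_div hD hns hB hij (-n)]
    with x ratio_eq hx
  simp only [ratio_eq _ hx]
  simpa only [ENNReal.ofReal_one] using
    ENNReal.tendsto_ofReal (hμ.tendsto_distortion hD hns hc hπ hB i j)

theorem admissible_permutation_renormalization_general (hμ : IsMarkovMeasure μ A P π)
    (hD : Doeblin A P) (hns : ShiftNonsingular μ) (hc : 0 < c) (hπ : ∀ n s, c ≤ π n s)
    (hB : IsAdmissiblePair A B B' L) (hij : (L : ℤ) ≤ |i - j|) :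
    ∀ᵐ x ∂μ, x ∈ (cylOf B L i ∩ cylOf B' L j) ∪ (cylOf B' L i ∩ cylOf B L j) →
      Tendsto (fun n : ℤ => (μ.map fun y => symSwap B B' L i j (shiftZ (-n) y)).rnDeriv μ x /
          (μ.map (shiftZ (-n))).rnDeriv μ x) cofinite (𝓝 1) := by
  have on_swapped := hμ.ae_tendsto_rnDeriv_map_symSwap_div hD hns hc hπ hB.symm hij
  rw [symSwap_comm] at on_swapped
  filter_upwards [hμ.ae_tendsto_rnDeriv_map_symSwap_div hD hns hc hπ hB hij, on_swapped]
    with x hx hx' hmem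
  exact hmem.elim hx hx'

end

/-- **Admissible permutations lie in the renormalization pseudo full-group.**
For a topologically mixing Markov SFT with the Doeblin condition whose shift is
nonsingular, every admissible permutation `V : B(i) ⇌ B'(j)` (equivalently, the
symmetric admissible permutation, which agrees with it on `B(i) ∩ B'(j)`)
satisfies: for μ-a.e. point `x` of its domain, the ratio
`(d(μ∘Tⁿ∘V)/dμ)(x) / (d(μ∘Tⁿ)/dμ)(x)` converges to `1` as `|n| → ∞`. -/
theorem admissible_permutation_renormalization
    {S : Type*} [Fintype S] [MeasurableSpace S] [MeasurableSingletonClass S]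
    (A : S → S → Bool) (hA : IsPrimitive A)
    (P : ℤ → S → S → ℝ) (π : ℤ → S → ℝ) (μ : Measure (Seq S))
    (hμ : IsMarkovMeasure μ A P π) (hD : Doeblin A P)
    (hns : ShiftNonsingular μ)
    (B B' : ℕ → S) (L : ℕ) (hL : 1 ≤ L)
    (hBadm : ∀ l : ℕ, l + 1 < L → A (B l) (B (l + 1)) = true)
    (hB'adm : ∀ l : ℕ, l + 1 < L → A (B' l) (B' (l + 1)) = true)
    (hfirst : B 0 = B' 0) (hlast : B (L - 1) = B' (L - 1))
    (hne : ∃ l < L, B l ≠ B' l)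
    (i j : ℤ) (hij : (L : ℤ) ≤ |i - j|) :
    ∀ᵐ x ∂μ,
      x ∈ (cylOf B L i ∩ cylOf B' L j) ∪ (cylOf B' L i ∩ cylOf B L j) →
        Tendsto (fun n : ℤ =>
            Measure.rnDeriv
                (Measure.map (fun y => symSwap B B' L i j (shiftZ (-n) y)) μ) μ x
              / Measure.rnDeriv (Measure.map (shiftZ (-n)) μ) μ x)
          cofinite (𝓝 (1 : ENNReal)) := by
  obtain ⟨c, hc, hπ⟩ := hμ.exists_pos_forall_le_dist_s16 hA hD
  exact admissible_permutation_renormalization_general hμ hD hns hc hπ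
    ⟨hBadm, hB'adm, hfirst, hlast⟩ hij

end MarkovSFT
end
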